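/- arXiv:1902.08264 — 11 statements merged into one kernel-verified Lean document; each statement's English description precedes it below -/
import Mathlib

section
/- Let U ⊆ V be an isotropic subspace and let A ∈ O(V) satisfy A(w) = w for every w ∈ U^⊥. Then for every v ∈ V the vector A(v) − v lies in U, and the bilinear map (v, v') ↦ (A(v) − v, v') is anti-symmetric, i.e. (A(v) − v, v') + (v, A(v') − v') = 0 for all v, v' ∈ V. -/
/-- The subspace orthogonal to `U` with respect to the bilinear form `Φ`. -/
def perp {V : Type*} [AddCommGroup V] [Module ℚ V]
    (Φ : V →ₗ[ℚ] V →ₗ[ℚ] ℚ) (U : Submodule ℚ V) : Submodule ℚ V where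
  carrier := {v | ∀ u ∈ U, Φ u v = 0}
  add_mem' := by
    intro a b ha hb u hu
    simp only [Set.mem_setOf_eq] at ha hb ⊢
    rw [map_add, ha u hu, hb u hu, add_zero]
  zero_mem' := by
    intro u _
    exact map_zero (Φ u)
  smul_mem' := by
    intro c a ha u hu
    simp only [Set.mem_setOf_eq] at ha ⊢
    rw [map_smul, ha u hu, smul_zero]

/-!
For `w ∈ U^⊥` we have `(w, A v - v) = (A w, A v) - (w, v) = 0`, so `A v - v` lies in the double
orthogonal of `U`, which is `U` plus the radical of the form. If `U` is isotropic then so is its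
double orthogonal, and the quadratic term of the expansion of `(A v, A v') = (v, v')` around `v`
and `v'` vanishes; what remains is the anti-symmetry.
-/

open LinearMap (BilinForm)

section CommRing

variable {R M : Type*} [CommRing R] [AddCommGroup M] [Module R M]
  {Φ : BilinForm R M} {U : Submodule R M} {A : M → M}

theorem sub_mem_orthogonal_orthogonal_of_fixes_orthogonal
    (hA : ∀ v w, Φ (A v) (A w) = Φ v w) (hfix : ∀ w ∈ Φ.orthogonal U, A w = w) (v : M) :
    A v - v ∈ Φ.orthogonal (Φ.orthogonal U) := by
  intro w hw
  calc Φ w (A v - v) = Φ (A w) (A v) - Φ w v := by rw [map_sub, hfix w hw]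
    _ = 0 := by rw [hA, sub_self]

theorem apply_eq_zero_of_mem_orthogonal_orthogonal (hU : U ≤ Φ.orthogonal U) {x y : M}
    (hx : x ∈ Φ.orthogonal (Φ.orthogonal U)) (hy : y ∈ Φ.orthogonal (Φ.orthogonal U)) :
    Φ x y = 0 :=
  hy x (BilinForm.orthogonal_le hU hx)

theorem apply_sub_add_apply_sub_eq_neg (hA : ∀ v w, Φ (A v) (A w) = Φ v w) (v w : M) :
    Φ (A v - v) w + Φ v (A w - w) = -Φ (A v - v) (A w - w) := by
  simp only [map_sub, LinearMap.sub_apply, hA]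
  ring

end CommRing

section Field

variable {K V : Type*} [Field K] [AddCommGroup V] [Module K V] {Φ : BilinForm K V}

theorem orthogonal_orthogonal_eq_sup_ker (hΦ : Φ.IsRefl) (U : Submodule K V)
    [FiniteDimensional K U] :
    Φ.orthogonal (Φ.orthogonal U) = U ⊔ LinearMap.ker Φ := by
  apply le_antisymm
  · intro v hv
    have hann : Φ v ∈ (LinearMap.range (Φ.domRestrict U)).dualCoannihilator.dualAnnihilator := by
      rw [BilinForm.toLin_restrict_range_dualCoannihilator_eq_orthogonal,
        Submodule.mem_dualAnnihilator]
      exact fun w hw => hΦ w v (hv w hw)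
    rwa [Subspace.dualCoannihilator_dualAnnihilator_eq, LinearMap.range_domRestrict,
      ← Submodule.mem_comap, Submodule.comap_map_eq] at hann
  · exact sup_le (BilinForm.le_orthogonal_orthogonal hΦ)
      fun v hv w _ => hΦ v w (LinearMap.congr_fun hv w)

theorem stmt2_general (hΦ : Φ.IsRefl) {U : Submodule K V} [FiniteDimensional K U]
    (hU : U ≤ Φ.orthogonal U) {A : V → V} (hA : ∀ v w, Φ (A v) (A w) = Φ v w)
    (hfix : ∀ w ∈ Φ.orthogonal U, A w = w) :
    (∀ v, A v - v ∈ U ⊔ LinearMap.ker Φ) ∧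
    (∀ v v', Φ (A v - v) v' + Φ v (A v' - v') = 0) := by
  have hmem := sub_mem_orthogonal_orthogonal_of_fixes_orthogonal hA hfix
  refine ⟨fun v => orthogonal_orthogonal_eq_sup_ker hΦ U ▸ hmem v, fun v v' => ?_⟩
  rw [apply_sub_add_apply_sub_eq_neg hA,
    apply_eq_zero_of_mem_orthogonal_orthogonal hU (hmem v) (hmem v'), neg_zero]

end Field

/-- If `U` is isotropic and `A ∈ O(V)` fixes `U^⊥` pointwise, then
`A(v) − v ∈ U` for every `v`, and the bilinear map `(v, v') ↦ (A(v) − v, v')` is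
anti-symmetric. -/
theorem stmt2 {V : Type*} [AddCommGroup V] [Module ℚ V] [FiniteDimensional ℚ V]
    (Φ : V →ₗ[ℚ] V →ₗ[ℚ] ℚ)
    (hsymm : ∀ v w : V, Φ v w = Φ w v)
    (hnd : ∀ v : V, (∀ w : V, Φ v w = 0) → v = 0)
    (U : Submodule ℚ V)
    (hUiso : ∀ u ∈ U, ∀ u' ∈ U, Φ u u' = 0)
    (A : V ≃ₗ[ℚ] V) (hA : ∀ v w : V, Φ (A v) (A w) = Φ v w)
    (hfix : ∀ w ∈ perp Φ U, A w = w) :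
    (∀ v : V, A v - v ∈ U) ∧
    (∀ v v' : V, Φ (A v - v) v' + Φ v (A v' - v') = 0) := by
  have hker : LinearMap.ker Φ = ⊥ := LinearMap.separatingLeft_iff_ker_eq_bot.mp hnd
  simpa only [hker, sup_bot_eq] using stmt2_general (fun v w h => (hsymm w v).trans h)
    (fun u hu u' hu' => hUiso u' hu' u hu) hA hfix
end

section
/- Let U ⊆ V be an isotropic subspace, and let A, B ∈ O(V) satisfy: A(u) = u and B(u) = u for all u ∈ U, and A(w) − w ∈ U and B(w) − w ∈ U for all w ∈ U^⊥. Then the commutator C = A∘B∘A⁻¹∘B⁻¹ fixes U^⊥ pointwise, and for every v ∈ V one has v − C(v) = B(A(v)) − A(B(v)), a vector lying in U. -/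
/-!
Put `W = U^⊥`. An isometry fixing `U` pointwise moves every vector by an element of `W`, so `A - 1`
and `B - 1` both map `V` into `W`, `W` into `U`, and `U` to `0`. Hence
`BA - AB = (B - 1)(A - 1) - (A - 1)(B - 1)` maps `V` into `U` and vanishes on `W`. Finally, if
`v = BAx`, then `v - Cv = (BA - AB)x`, and `x` may be replaced by `v` because `v - x ∈ W`.
-/

section Chain

variable {R M : Type*} [Ring R] [AddCommGroup M] [Module R M] {W U : Submodule R M}

/-- `f` acts trivially on the factors `M / W`, `W / U` and `U` of the chain `M ≥ W ≥ U ≥ 0`: it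
lies in the stability group of that chain. This is phrased through the displacements `f v - v`, so
that it makes sense without `U ≤ W`. -/
structure StabilizesChain (W U : Submodule R M) (f : M → M) : Prop where
  sub_mem : ∀ v, f v - v ∈ W
  sub_mem_of_mem : ∀ w ∈ W, f w - w ∈ U
  apply_of_mem : ∀ u ∈ U, f u = u

theorem map_map_sub_map_map_eq_displacements {F M : Type*} [AddCommGroup M] [FunLike F M M]
    [AddMonoidHomClass F M M] (f g : F) (v : M) :
    g (f v) - f (g v) = (g (f v - v) - (f v - v)) - (f (g v - v) - (g v - v)) := by
  simp only [map_sub]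
  abel

namespace StabilizesChain

variable {F : Type*} [FunLike F M M] [AddMonoidHomClass F M M]

theorem map_map_sub_map_map_mem {f g : F} (hf : StabilizesChain W U f)
    (hg : StabilizesChain W U g) (v : M) : g (f v) - f (g v) ∈ U := by
  rw [map_map_sub_map_map_eq_displacements]
  exact U.sub_mem (hg.sub_mem_of_mem _ (hf.sub_mem v)) (hf.sub_mem_of_mem _ (hg.sub_mem v))

theorem map_map_comm_of_mem {f g : F} (hf : StabilizesChain W U f)
    (hg : StabilizesChain W U g) {w : M} (hw : w ∈ W) : g (f w) = f (g w) := by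
  rw [← sub_eq_zero, map_map_sub_map_map_eq_displacements,
    hg.apply_of_mem _ (hf.sub_mem_of_mem w hw), hf.apply_of_mem _ (hg.sub_mem_of_mem w hw)]
  simp only [sub_self]

theorem map_map_sub_self_mem {f g : M → M} (hf : StabilizesChain W U f)
    (hg : StabilizesChain W U g) (v : M) : g (f v) - v ∈ W := by
  rw [← sub_add_sub_cancel _ (f v)]
  exact W.add_mem (hg.sub_mem (f v)) (hf.sub_mem v)

theorem sub_commutator_apply {A B : M ≃ₗ[R] M} (hA : StabilizesChain W U A)
    (hB : StabilizesChain W U B) (v : M) :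
    v - A (B (A.symm (B.symm v))) = B (A v) - A (B v) := by
  obtain ⟨x, rfl⟩ : ∃ x, B (A x) = v := (A.trans B).surjective v
  have comm_displacement : B (A (B (A x) - x)) = A (B (B (A x) - x)) :=
    hA.map_map_comm_of_mem hB (hA.map_map_sub_self_mem hB x)
  simp only [map_sub] at comm_displacement
  simp only [LinearEquiv.symm_apply_apply]
  exact (sub_eq_sub_iff_sub_eq_sub.mp comm_displacement).symm

theorem commutator_apply_of_mem {A B : M ≃ₗ[R] M} (hA : StabilizesChain W U A)
    (hB : StabilizesChain W U B) {w : M} (hw : w ∈ W) : A (B (A.symm (B.symm w))) = w := by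
  have comm_w : B (A w) = A (B w) := hA.map_map_comm_of_mem hB hw
  have sub_eq := hA.sub_commutator_apply hB w
  rw [comm_w, sub_self] at sub_eq
  exact (sub_eq_zero.mp sub_eq).symm

end StabilizesChain

end Chain

section Isometry

variable {R S M N : Type*} [CommRing R] [CommRing S] [AddCommGroup M] [Module R M]
  [AddCommGroup N] [Module S N] {I J : R →+* S} {Φ : M →ₛₗ[I] M →ₛₗ[J] N} {U : Submodule R M}

theorem apply_sub_self_mem_orthogonalBilin {f : M → M} (hf : ∀ v w, Φ (f v) (f w) = Φ v w)
    (hfU : ∀ u ∈ U, f u = u) (v : M) : f v - v ∈ U.orthogonalBilin Φ := fun u hu ↦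
  calc
    Φ u (f v - v) = Φ (f u) (f v) - Φ u v := by rw [map_sub, hfU u hu]
    _ = 0 := by rw [hf, sub_self]

theorem stabilizesChain_orthogonalBilin {f : M → M} (hf : ∀ v w, Φ (f v) (f w) = Φ v w)
    (hfU : ∀ u ∈ U, f u = u) (hfperp : ∀ w ∈ U.orthogonalBilin Φ, f w - w ∈ U) :
    StabilizesChain (U.orthogonalBilin Φ) U f where
  sub_mem := apply_sub_self_mem_orthogonalBilin hf hfU
  sub_mem_of_mem := hfperp
  apply_of_mem := hfU

end Isometry

theorem perp_eq_orthogonalBilin {V : Type*} [AddCommGroup V] [Module ℚ V]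
    (Φ : V →ₗ[ℚ] V →ₗ[ℚ] ℚ) (U : Submodule ℚ V) : perp Φ U = U.orthogonalBilin Φ :=
  rfl

theorem stmt4_general {R S M N : Type*} [CommRing R] [CommRing S] [AddCommGroup M] [Module R M]
    [AddCommGroup N] [Module S N] {I J : R →+* S} (Φ : M →ₛₗ[I] M →ₛₗ[J] N) (U : Submodule R M)
    (A B : M ≃ₗ[R] M)
    (hA : ∀ v w : M, Φ (A v) (A w) = Φ v w)
    (hB : ∀ v w : M, Φ (B v) (B w) = Φ v w)
    (hAU : ∀ u ∈ U, A u = u) (hBU : ∀ u ∈ U, B u = u)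
    (hAperp : ∀ w ∈ U.orthogonalBilin Φ, A w - w ∈ U)
    (hBperp : ∀ w ∈ U.orthogonalBilin Φ, B w - w ∈ U) :
    (∀ w ∈ U.orthogonalBilin Φ, A (B (A.symm (B.symm w))) = w) ∧
    (∀ v : M, v - A (B (A.symm (B.symm v))) = B (A v) - A (B v) ∧
      B (A v) - A (B v) ∈ U) := by
  have chainA := stabilizesChain_orthogonalBilin hA hAU hAperp
  have chainB := stabilizesChain_orthogonalBilin hB hBU hBperp
  exact ⟨fun w hw ↦ chainA.commutator_apply_of_mem chainB hw, fun v ↦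
    ⟨chainA.sub_commutator_apply chainB v, chainA.map_map_sub_map_map_mem chainB v⟩⟩

/-- If `U` is isotropic and `A, B ∈ O(V)` fix `U` pointwise and
shift `U^⊥` by elements of `U`, then the commutator `C = A∘B∘A⁻¹∘B⁻¹` fixes `U^⊥`
pointwise, and `v − C(v) = B(A(v)) − A(B(v)) ∈ U` for every `v ∈ V`. -/
theorem stmt4 {V : Type*} [AddCommGroup V] [Module ℚ V] [FiniteDimensional ℚ V]
    (Φ : V →ₗ[ℚ] V →ₗ[ℚ] ℚ)
    (hsymm : ∀ v w : V, Φ v w = Φ w v)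
    (hnd : ∀ v : V, (∀ w : V, Φ v w = 0) → v = 0)
    (U : Submodule ℚ V)
    (hUiso : ∀ u ∈ U, ∀ u' ∈ U, Φ u u' = 0)
    (A B : V ≃ₗ[ℚ] V)
    (hA : ∀ v w : V, Φ (A v) (A w) = Φ v w)
    (hB : ∀ v w : V, Φ (B v) (B w) = Φ v w)
    (hAU : ∀ u ∈ U, A u = u) (hBU : ∀ u ∈ U, B u = u)
    (hAperp : ∀ w ∈ perp Φ U, A w - w ∈ U)
    (hBperp : ∀ w ∈ perp Φ U, B w - w ∈ U) :
    (∀ w ∈ perp Φ U, A (B (A.symm (B.symm w))) = w) ∧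
    (∀ v : V, v - A (B (A.symm (B.symm v))) = B (A v) - A (B v) ∧
      B (A v) - A (B v) ∈ U) := by
  rw [perp_eq_orthogonalBilin] at hAperp hBperp ⊢
  exact stmt4_general Φ U A B hA hB hAU hBU hAperp hBperp
end

section
/- Let U ⊆ V be an isotropic subspace and let Ũ be a subspace of V complementary to U^⊥, i.e. U^⊥ ∩ Ũ = {0} and U^⊥ + Ũ = V. Then there exists a unique ℚ-linear map α : Ũ → U such that α is symmetric, i.e. (α(ũ), ṽ) = (ũ, α(ṽ)) for all ũ, ṽ ∈ Ũ, and the subspace {ũ − α(ũ) : ũ ∈ Ũ} is isotropic, i.e. (ũ − α(ũ), ṽ − α(ṽ)) = 0 for all ũ, ṽ ∈ Ũ. -/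
/-!
A vector of `U` orthogonal to `Ũ` is orthogonal to `U^⊥ + Ũ = V`, hence zero, and a vector of `Ũ`
orthogonal to `U` lies in `U^⊥ ∩ Ũ = 0`; so the form restricts to a perfect pairing of `U` with `Ũ`.
For `α` with values in the isotropic subspace `U`, the term `(α ũ, α ṽ)` vanishes, so symmetry of
`α` and isotropy of `{ũ − α ũ}` together say exactly that `(α ũ, ṽ) = (ũ, ṽ) / 2` for all `ũ, ṽ`,
and the perfect pairing gives exactly one such `α`.
-/

section CommRing

variable {R M N P L : Type*} [CommRing R] [AddCommGroup M] [Module R M] [AddCommGroup N]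
  [Module R N] [AddCommGroup P] [Module R P] [AddCommGroup L] [Module R L]

theorem separatingLeft_domRestrict₁₂_of_codisjoint {B : M →ₗ[R] N →ₗ[R] P} {U : Submodule R M}
    {W : Submodule R N} (hU : Disjoint U (LinearMap.ker B))
    (hW : Codisjoint (U.orthogonalBilin B) W) :
    (B.domRestrict₁₂ U W).SeparatingLeft := by
  intro u hu
  have hker : (u : M) ∈ LinearMap.ker B := by
    ext v
    obtain ⟨a, w, ha, hw, rfl⟩ := Submodule.codisjoint_iff_exists_add_eq.1 hW v
    have ha' : B u a = 0 := ha u u.2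
    have hw' : B u w = 0 := hu ⟨w, hw⟩
    rw [map_add, ha', hw', add_zero, LinearMap.zero_apply]
  exact Subtype.ext (Submodule.disjoint_def.1 hU u u.2 hker)

theorem separatingRight_domRestrict₁₂_of_disjoint {B : M →ₗ[R] N →ₗ[R] P} {U : Submodule R M}
    {W : Submodule R N} (hW : Disjoint (U.orthogonalBilin B) W) :
    (B.domRestrict₁₂ U W).SeparatingRight := fun w hw ↦
  Subtype.ext (Submodule.disjoint_def.1 hW w (fun u hu ↦ hw ⟨u, hu⟩) w.2)

theorem existsUnique_linearMap_mem_and_apply_eq {B : M →ₗ[R] N →ₗ[R] P} {U : Submodule R M}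
    {W : Submodule R N} (h : Function.Bijective (B.domRestrict₁₂ U W)) (f : L →ₗ[R] W →ₗ[R] P) :
    ∃! α : L →ₗ[R] M, (∀ x, α x ∈ U) ∧ ∀ x (y : W), B (α x) y = f x y := by
  let e := LinearEquiv.ofBijective (B.domRestrict₁₂ U W) h
  refine ⟨U.subtype ∘ₗ e.symm ∘ₗ f, ⟨fun x ↦ (e.symm (f x)).2, fun x y ↦ ?_⟩, ?_⟩
  · exact LinearMap.congr_fun (e.apply_symm_apply (f x)) y
  · rintro β ⟨hβU, hβ⟩
    ext x
    have hx : e ⟨β x, hβU x⟩ = f x := LinearMap.ext (hβ x)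
    exact congr_arg Subtype.val (e.eq_symm_apply.2 hx)

variable [Invertible (2 : R)] {B : LinearMap.BilinForm R M} {U W : Submodule R M}

theorem symmetric_and_isotropic_sub_iff_apply_eq_invOf_two_mul (hB : B.IsSymm) {α : W → M}
    (hα : ∀ x y, B (α x) (α y) = 0) :
    ((∀ x y : W, B (α x) y = B x (α y)) ∧ ∀ x y : W, B (x - α x) (y - α y) = 0) ↔
      ∀ x y : W, B (α x) y = ⅟2 * B x y := by
  have expand (x y : W) : B (x - α x) (y - α y) = B x y - B (α x) y - B x (α y) := by
    simp only [map_sub, LinearMap.sub_apply, hα]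
    ring
  simp only [expand]
  constructor
  · rintro ⟨hsymm, hiso⟩ x y
    rw [← mul_left_eq_iff_eq_invOf_mul]
    linear_combination hsymm x y - hiso x y
  · intro h
    have hsymm (x y : W) : B (α x) y = B x (α y) := by
      rw [h, hB.eq x (α y), h, hB.eq]
    refine ⟨hsymm, fun x y ↦ ?_⟩
    linear_combination hsymm x y - mul_left_eq_iff_eq_invOf_mul.2 (h x y)

theorem existsUnique_symmetric_isotropic_sub_of_bijective (hB : B.IsSymm)
    (hU : U ≤ U.orthogonalBilin B) (h : Function.Bijective (B.domRestrict₁₂ U W)) :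
    ∃! α : W →ₗ[R] M, (∀ x, α x ∈ U) ∧ (∀ x y : W, B (α x) y = B x (α y)) ∧
      ∀ x y : W, B (x - α x) (y - α y) = 0 := by
  refine (existsUnique_congr fun α ↦ and_congr_right fun hα ↦ ?_).2
    (existsUnique_linearMap_mem_and_apply_eq h (⅟(2 : R) • B.domRestrict₁₂ W W))
  exact symmetric_and_isotropic_sub_iff_apply_eq_invOf_two_mul hB
    fun x y ↦ hU (hα y) _ (hα x)

end CommRing

section Field

variable {K V V' : Type*} [Field K] [AddCommGroup V] [Module K V] [AddCommGroup V'] [Module K V']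

theorem isPerfPair_domRestrict₁₂_of_isCompl {B : V →ₗ[K] V' →ₗ[K] K} {U : Submodule K V}
    {W : Submodule K V'} [FiniteDimensional K U] (hU : Disjoint U (LinearMap.ker B))
    (hW : IsCompl (U.orthogonalBilin B) W) : (B.domRestrict₁₂ U W).IsPerfPair :=
  .of_injective
    (LinearMap.ker_eq_bot.1 (LinearMap.separatingLeft_iff_ker_eq_bot.1
      (separatingLeft_domRestrict₁₂_of_codisjoint hU hW.codisjoint)))
    (LinearMap.ker_eq_bot.1 (LinearMap.separatingRight_iff_flip_ker_eq_bot.1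
      (separatingRight_domRestrict₁₂_of_disjoint hW.disjoint)))

theorem stmt5_general [Invertible (2 : K)] {B : LinearMap.BilinForm K V} (hB : B.IsSymm)
    {U W : Submodule K V} [FiniteDimensional K U] (hrad : Disjoint U (LinearMap.ker B))
    (hU : U ≤ U.orthogonalBilin B) (hW : IsCompl (U.orthogonalBilin B) W) :
    ∃! α : W →ₗ[K] V, (∀ x, α x ∈ U) ∧ (∀ x y : W, B (α x) y = B x (α y)) ∧
      ∀ x y : W, B (x - α x) (y - α y) = 0 :=
  existsUnique_symmetric_isotropic_sub_of_bijective hB hU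
    (isPerfPair_domRestrict₁₂_of_isCompl hrad hW).bijective_left

end Field

/-- If `U` is isotropic and `Ũ` is a complement of `U^⊥` in `V`,
then there is a unique symmetric linear map `α : Ũ → U` such that
`{ũ − α(ũ) : ũ ∈ Ũ}` is isotropic. -/
theorem stmt5 {V : Type*} [AddCommGroup V] [Module ℚ V] [FiniteDimensional ℚ V]
    (Φ : V →ₗ[ℚ] V →ₗ[ℚ] ℚ)
    (hsymm : ∀ v w : V, Φ v w = Φ w v)
    (hnd : ∀ v : V, (∀ w : V, Φ v w = 0) → v = 0)
    (U Ut : Submodule ℚ V)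
    (hUiso : ∀ u ∈ U, ∀ u' ∈ U, Φ u u' = 0)
    (hdisj : perp Φ U ⊓ Ut = ⊥) (hcompl : perp Φ U ⊔ Ut = ⊤) :
    ∃! α : ↥Ut →ₗ[ℚ] V,
      (∀ x : ↥Ut, α x ∈ U) ∧
      (∀ x y : ↥Ut, Φ (α x) (y : V) = Φ (x : V) (α y)) ∧
      (∀ x y : ↥Ut, Φ ((x : V) - α x) ((y : V) - α y) = 0) := by
  rw [perp_eq_orthogonalBilin] at hdisj hcompl
  have hker : LinearMap.ker Φ = ⊥ :=
    LinearMap.ker_eq_bot'.2 fun v hv ↦ hnd v (LinearMap.congr_fun hv)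
  exact stmt5_general ⟨hsymm⟩ (hker ▸ disjoint_bot_right) (fun u' hu' u hu ↦ hUiso u hu u' hu')
    ⟨disjoint_iff.2 hdisj, codisjoint_iff.2 hcompl⟩
end

section
/- Let U ⊆ V be an isotropic subspace, Ũ a subspace complementary to U^⊥ (U^⊥ ∩ Ũ = {0}, U^⊥ + Ũ = V), and W̃ = (U + Ũ)^⊥. Let G = {A ∈ O(V) : A(U) = U and A(U + Ũ) = U + Ũ}. Then every A ∈ G satisfies A(W̃) = W̃, the map G → GL(U) × O(W̃) sending A to (A|_U, A|_{W̃}) (where O(W̃) is the group of linear automorphisms of W̃ preserving the restricted bilinear form) is a surjective group homomorphism, and its kernel consists exactly of the maps v ↦ v − η(v) for ℚ-linear maps η : V → U vanishing on U^⊥ and satisfying (η(v), v') = −(v, η(v')) for all v, v' ∈ V. -/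
/-!
Only the sum `U ⊔ T` matters, not the complement `T` of `U^⊥` itself. If `σ : T → U` is defined by
`B (σ t) t' = B t t'`, then `T' = {t - σ t / 2}` is an isotropic complement of `U^⊥` with
`U ⊔ T' = U ⊔ T`. For `W = (U ⊔ T)^⊥`, the decomposition `V = U ⊕ T' ⊕ W` turns an automorphism `f`
of `U` and an isometry `γ` of `W` into the isometry `f ⊕ g ⊕ γ`, where `g` is the contragredient of
`f` under the perfect pairing of `U` with `T'`.

For the kernel, `U^⊥ = U ⊕ W`, so an isometry `A` trivial on `U` and `W` is trivial on `U^⊥`, and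
`η = id - A` maps `V` into `U^⊥`. If `A` preserves `U ⊔ T`, then the image of `η`, which is `η T`,
lies in `(U ⊔ T) ⊓ U^⊥ = U`. Since `U` is isotropic, `B (η v) (η v') = 0`, and expanding this
gives the skewness of `η`.
-/

section CommRing

open Submodule LinearMap.BilinForm

variable {R M N : Type*} [CommRing R] [AddCommGroup M] [Module R M] [AddCommGroup N] [Module R N]

theorem map_eq_self_of_forall_apply_eq {A : M ≃ₗ[R] M} {P : Submodule R M} (f : P ≃ₗ[R] P)
    (h : ∀ x : P, A x = f x) : P.map A.toLinearMap = P := by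
  apply le_antisymm
  · rintro _ ⟨x, hx, rfl⟩
    exact (h ⟨x, hx⟩).symm ▸ (f ⟨x, hx⟩).2
  · intro y hy
    exact ⟨f.symm ⟨y, hy⟩, (f.symm ⟨y, hy⟩).2, by simp [h]⟩

theorem exists_contragredient (p : M →ₗ[R] N →ₗ[R] R) [p.IsPerfPair] (f : M ≃ₗ[R] M) :
    ∃ g : N ≃ₗ[R] N, ∀ x y, p (f x) (g y) = p x y :=
  ⟨p.flip.toPerfPair ≪≫ₗ f.symm.dualMap ≪≫ₗ p.flip.toPerfPair.symm, fun x y ↦ by simp⟩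

variable {B : LinearMap.BilinForm R M}

theorem map_orthogonal_of_isOrthogonal {A : M ≃ₗ[R] M} (hA : B.IsOrthogonal A)
    (P : Submodule R M) :
    (B.orthogonal P).map A.toLinearMap = B.orthogonal (P.map A.toLinearMap) := by
  ext y
  obtain ⟨x, rfl⟩ := A.surjective y
  rw [mem_map_equiv, A.symm_apply_apply]
  constructor
  · rintro hx _ ⟨p, hp, rfl⟩
    exact (hA p x).trans (hx p hp)
  · exact fun hx p hp ↦ (hA p x).symm.trans (hx _ ⟨p, hp, rfl⟩)

variable {U T W : Submodule R M}

/-- The internal direct sum decomposition `M = U ⊕ T ⊕ W`, with the sum stated in two stages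
because in a Witt decomposition `W` is the orthogonal complement of `U ⊔ T`. -/
noncomputable def prodProdEquivOfIsCompl (hUT : Disjoint U T) (hW : IsCompl (U ⊔ T) W) :
    ((U × T) × W) ≃ₗ[R] M :=
  .ofBijective ((U.subtype.coprod T.subtype).coprod W.subtype) <| by
    have hrange : LinearMap.range (U.subtype.coprod T.subtype) = U ⊔ T := (sup_eq_range U T).symm
    constructor
    · rw [← LinearMap.ker_eq_bot, LinearMap.ker_coprod_of_disjoint_range,
        LinearMap.ker_coprod_of_disjoint_range] <;>
      simp [hrange, hUT, hW.disjoint]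
    · rw [← LinearMap.range_eq_top, LinearMap.range_coprod, hrange, range_subtype, hW.sup_eq_top]

@[simp]
theorem prodProdEquivOfIsCompl_apply (hUT : Disjoint U T) (hW : IsCompl (U ⊔ T) W)
    (x : (U × T) × W) : prodProdEquivOfIsCompl hUT hW x = x.1.1 + x.1.2 + x.2 := rfl

theorem apply_add_add_add_add (hB : B.IsSymm) (hU : U ≤ B.orthogonal U) (hT : T ≤ B.orthogonal T)
    (hW : W ≤ B.orthogonal (U ⊔ T)) (u u' : U) (t t' : T) (w w' : W) :
    B (u + t + w) (u' + t' + w') = B u t' + B u' t + B w w' := by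
  have hUW (u : U) (w : W) : B u w = 0 := hW w.2 u (mem_sup_left u.2)
  have hTW (t : T) (w : W) : B t w = 0 := hW w.2 t (mem_sup_right t.2)
  have hUU : B u u' = 0 := hU u'.2 u u.2
  have hTT : B t t' = 0 := hT t'.2 t t.2
  simp [hUU, hTT, hUW, hTW, hB.eq w, hB.eq t u']

theorem exists_isOrthogonal_extending_of_isotropic (hB : B.IsSymm) (hU : U ≤ B.orthogonal U)
    (hT : T ≤ B.orthogonal T) (hW : W ≤ B.orthogonal (U ⊔ T)) (hUT : Disjoint U T)
    (hUTW : IsCompl (U ⊔ T) W) (f : U ≃ₗ[R] U) (g : T ≃ₗ[R] T) (γ : W ≃ₗ[R] W)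
    (hfg : ∀ u t, B (f u) (g t) = B u t) (hγ : ∀ x y, B (γ x) (γ y) = B x y) :
    ∃ A : M ≃ₗ[R] M, B.IsOrthogonal A ∧
      (∀ u : U, A u = f u) ∧ (∀ t : T, A t = g t) ∧ ∀ w : W, A w = γ w := by
  let e := prodProdEquivOfIsCompl hUT hUTW
  let A := e.symm ≪≫ₗ (f.prodCongr g).prodCongr γ ≪≫ₗ e
  have hA (u : U) (t : T) (w : W) : A (u + t + w) = f u + g t + γ w := by
    change e ((f.prodCongr g).prodCongr γ (e.symm (e ((u, t), w)))) = _
    rw [e.symm_apply_apply]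
    rfl
  refine ⟨A, fun v v' ↦ ?_, fun u ↦ ?_, fun t ↦ ?_, fun w ↦ ?_⟩
  · obtain ⟨⟨⟨u, t⟩, w⟩, rfl⟩ := e.surjective v
    obtain ⟨⟨⟨u', t'⟩, w'⟩, rfl⟩ := e.surjective v'
    simp only [e, prodProdEquivOfIsCompl_apply, hA, apply_add_add_add_add hB hU hT hW, hfg, hγ]
  · simpa using hA u 0 0
  · simpa using hA 0 t 0
  · simpa using hA 0 0 w

theorem sup_inf_orthogonal (hU : U ≤ B.orthogonal U) (hT : Disjoint (B.orthogonal U) T) :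
    (U ⊔ T) ⊓ B.orthogonal U = U := by
  rw [sup_inf_assoc_of_le T hU, hT.symm.eq_bot, sup_bot_eq]

theorem sup_orthogonal_sup (hU : U ≤ B.orthogonal U) (hT : Disjoint (B.orthogonal U) T)
    (hUT : Codisjoint (U ⊔ T) (B.orthogonal (U ⊔ T))) :
    U ⊔ B.orthogonal (U ⊔ T) = B.orthogonal U := by
  have hW : B.orthogonal (U ⊔ T) ≤ B.orthogonal U := orthogonal_le le_sup_left
  calc U ⊔ B.orthogonal (U ⊔ T)
      = (B.orthogonal U ⊓ (U ⊔ T)) ⊔ B.orthogonal (U ⊔ T) := by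
        rw [inf_comm, sup_inf_orthogonal hU hT]
    _ = B.orthogonal U := by rw [inf_sup_assoc_of_le _ hW, hUT.eq_top, inf_top_eq]

theorem mem_ker_of_mem_orthogonal (hB : B.IsRefl) (hT : Codisjoint (B.orthogonal U) T) {u : M}
    (hu : u ∈ U) (huT : u ∈ B.orthogonal T) : u ∈ LinearMap.ker B := by
  rw [← orthogonal_top_eq_ker hB, ← hT.eq_top]
  intro v hv
  obtain ⟨p, hp, t, ht, rfl⟩ := mem_sup.1 hv
  have hpu : B p u = 0 := hB _ _ (hp u hu)
  have htu : B t u = 0 := huT t ht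
  simp [hpu, htu]

theorem disjoint_sup_orthogonal (hB : B.IsRefl) (hU : U ≤ B.orthogonal U)
    (hrad : Disjoint U (LinearMap.ker B)) (hT : IsCompl (B.orthogonal U) T) :
    Disjoint (U ⊔ T) (B.orthogonal (U ⊔ T)) := by
  refine disjoint_def.2 fun x hx hxperp ↦ ?_
  have hxU : x ∈ U := (sup_inf_orthogonal hU hT.disjoint).le
    (mem_inf.2 ⟨hx, fun u hu ↦ hxperp u (mem_sup_left hu)⟩)
  have hxT : x ∈ B.orthogonal T := fun t ht ↦ hxperp t (mem_sup_right ht)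
  exact disjoint_def.1 hrad x hxU (mem_ker_of_mem_orthogonal hB hT.codisjoint hxU hxT)

theorem sub_apply_mem_orthogonal {A : M ≃ₗ[R] M} (hA : B.IsOrthogonal A) {P : Submodule R M}
    (hP : ∀ x ∈ P, A x = x) (v : M) : v - A v ∈ B.orthogonal P := by
  intro x hx
  have hAx : B x (A v) = B x v := by simpa only [hP x hx] using hA x v
  exact (map_sub (B x) v (A v)).trans (sub_eq_zero.2 hAx.symm)

theorem sub_apply_mem_of_forall_mem_orthogonal {A : M ≃ₗ[R] M} (hA : B.IsOrthogonal A)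
    (hU : U ≤ B.orthogonal U) (hT : IsCompl (B.orthogonal U) T)
    (hAUT : (U ⊔ T).map A.toLinearMap = U ⊔ T) (hfix : ∀ x ∈ B.orthogonal U, A x = x) (v : M) :
    v - A v ∈ U := by
  obtain ⟨p, t, hp, ht, rfl⟩ := codisjoint_iff_exists_add_eq.1 hT.codisjoint v
  have htUT : t ∈ U ⊔ T := mem_sup_right ht
  have hAt : A t ∈ U ⊔ T := hAUT.le (mem_map_of_mem htUT)
  have hsub : p + t - A (p + t) = t - A t := by rw [map_add, hfix p hp]; abel
  rw [hsub, ← sup_inf_orthogonal hU hT.disjoint]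
  exact mem_inf.2
    ⟨sub_mem htUT hAt, sub_apply_mem_orthogonal hA (fun u hu ↦ hfix u (hU hu)) t⟩

theorem apply_sub_apply_left_eq_neg {A : M ≃ₗ[R] M} (hA : B.IsOrthogonal A)
    (hU : U ≤ B.orthogonal U) (hmem : ∀ v, v - A v ∈ U) (v v' : M) :
    B (v - A v) v' = -B v (v' - A v') := by
  have hiso : B (v - A v) (v' - A v') = 0 := hU (hmem v') _ (hmem v)
  simp only [map_sub, LinearMap.sub_apply] at hiso ⊢
  linear_combination hiso - hA v v'

theorem fixes_iff_exists_eq_sub {A : M ≃ₗ[R] M} (hA : B.IsOrthogonal A)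
    (hU : U ≤ B.orthogonal U) (hT : IsCompl (B.orthogonal U) T)
    (hUT : Codisjoint (U ⊔ T) (B.orthogonal (U ⊔ T)))
    (hAUT : (U ⊔ T).map A.toLinearMap = U ⊔ T) :
    ((∀ u ∈ U, A u = u) ∧ ∀ x ∈ B.orthogonal (U ⊔ T), A x = x) ↔
      ∃ η : M →ₗ[R] M, (∀ v, η v ∈ U) ∧ (∀ x ∈ B.orthogonal U, η x = 0) ∧
        (∀ v v', B (η v) v' = -B v (η v')) ∧ ∀ v, A v = v - η v := by
  constructor
  · rintro ⟨hAU, hAW⟩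
    have hfix : ∀ x ∈ B.orthogonal U, A x = x := by
      intro x hx
      rw [← sup_orthogonal_sup hU hT.disjoint hUT] at hx
      obtain ⟨u, hu, w, hw, rfl⟩ := mem_sup.1 hx
      rw [map_add, hAU u hu, hAW w hw]
    have hmem := sub_apply_mem_of_forall_mem_orthogonal hA hU hT hAUT hfix
    exact ⟨LinearMap.id - A.toLinearMap, hmem, fun x hx ↦ sub_eq_zero.2 (hfix x hx).symm,
      apply_sub_apply_left_eq_neg hA hU hmem, fun v ↦ (sub_sub_cancel v (A v)).symm⟩
  · rintro ⟨η, -, hη, -, hAη⟩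
    have hfix : ∀ x ∈ B.orthogonal U, A x = x := fun x hx ↦ by rw [hAη, hη x hx, sub_zero]
    have hW : B.orthogonal (U ⊔ T) ≤ B.orthogonal U := orthogonal_le le_sup_left
    exact ⟨fun u hu ↦ hfix u (hU hu), fun x hx ↦ hfix x (hW hx)⟩

end CommRing

section Field

open Submodule LinearMap.BilinForm

variable {K V : Type*} [Field K] [AddCommGroup V] [Module K V] {B : LinearMap.BilinForm K V}
  {U T : Submodule K V}

theorem isCompl_orthogonal_of_disjoint [FiniteDimensional K U] (hB : B.IsRefl)
    (h : Disjoint U (B.orthogonal U)) : IsCompl U (B.orthogonal U) := by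
  refine ⟨h, codisjoint_iff_exists_add_eq.2 fun v ↦ ?_⟩
  have hnd : (B.restrict U).Nondegenerate := B.nondegenerate_restrict_of_disjoint_orthogonal hB h
  let u : U := ((B.restrict U).toDual hnd).symm ((B v).domRestrict U)
  have hu (x : U) : B u x = B v x := apply_toDual_symm_apply (hB := hnd) _ x
  refine ⟨u, v - u, u.2, fun x hx ↦ hB _ _ ?_, by simp⟩
  simp [hu ⟨x, hx⟩]

theorem isPerfPair_domRestrict₁₂ [FiniteDimensional K U] (hB : B.IsRefl)
    (hrad : Disjoint U (LinearMap.ker B)) (hT : IsCompl (B.orthogonal U) T) :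
    (B.domRestrict₁₂ U T).IsPerfPair := by
  apply LinearMap.IsPerfPair.of_injective
  · rw [← LinearMap.ker_eq_bot, LinearMap.ker_eq_bot']
    intro u hu
    have huT : (u : V) ∈ B.orthogonal T := fun t ht ↦ hB _ _ congr($hu ⟨t, ht⟩)
    exact Subtype.ext <|
      disjoint_def.1 hrad u u.2 (mem_ker_of_mem_orthogonal hB hT.codisjoint u.2 huT)
  · rw [← LinearMap.ker_eq_bot, LinearMap.ker_eq_bot']
    intro t ht
    have htU : (t : V) ∈ B.orthogonal U := fun u hu ↦ congr($ht ⟨u, hu⟩)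
    exact Subtype.ext <| disjoint_def.1 hT.disjoint t htU t.2

theorem isCompl_sup_orthogonal [FiniteDimensional K U] (hB : B.IsRefl) (hU : U ≤ B.orthogonal U)
    (hrad : Disjoint U (LinearMap.ker B)) (hT : IsCompl (B.orthogonal U) T) :
    IsCompl (U ⊔ T) (B.orthogonal (U ⊔ T)) := by
  have : (B.domRestrict₁₂ U T).IsPerfPair := isPerfPair_domRestrict₁₂ hB hrad hT
  have : FiniteDimensional K T := .of_injective _ (B.domRestrict₁₂ U T).flip.toPerfPair.injective
  exact isCompl_orthogonal_of_disjoint hB (disjoint_sup_orthogonal hB hU hrad hT)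

theorem exists_isotropic_isCompl [NeZero (2 : K)] (hB : B.IsSymm) (hU : U ≤ B.orthogonal U)
    (hT : IsCompl (B.orthogonal U) T) [(B.domRestrict₁₂ U T).IsPerfPair] :
    ∃ T' : Submodule K V, T' ≤ B.orthogonal T' ∧ IsCompl (B.orthogonal U) T' ∧ U ⊔ T' = U ⊔ T := by
  let σ : T →ₗ[K] U := (B.domRestrict₁₂ U T).toPerfPair.symm ∘ₗ B.domRestrict₁₂ T T
  have hσ (t t' : T) : B (σ t) t' = B t t' :=
    congr($((B.domRestrict₁₂ U T).apply_symm_toPerfPair_self (B.domRestrict₁₂ T T t)) t')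
  let τ : T →ₗ[K] V := T.subtype - (2⁻¹ : K) • U.subtype ∘ₗ σ
  have hτ (t : T) : τ t = t - (2⁻¹ : K) • (σ t : V) := rfl
  have hτU (t : T) : τ t - t ∈ U := by
    rw [hτ, sub_sub_cancel_left]
    exact neg_mem (U.smul_mem _ (σ t).2)
  have hsup : U ⊔ LinearMap.range τ = U ⊔ T := by
    apply le_antisymm <;> refine sup_le le_sup_left ?_
    · rintro _ ⟨t, rfl⟩
      exact mem_sup.2 ⟨_, hτU t, t, t.2, by simp⟩
    · intro t ht
      exact mem_sup.2 ⟨_, neg_mem (hτU ⟨t, ht⟩), τ ⟨t, ht⟩, ⟨_, rfl⟩, by simp⟩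
  refine ⟨LinearMap.range τ, ?_, ⟨?_, ?_⟩, hsup⟩
  · rintro _ ⟨t', rfl⟩ _ ⟨t, rfl⟩
    have hσσ : B (σ t) (σ t') = 0 := hU (σ t').2 _ (σ t).2
    have h2 : (2 : K) ≠ 0 := two_ne_zero
    simp only [hτ, map_sub, map_smul, LinearMap.sub_apply, LinearMap.smul_apply, hσ, hσσ,
      hB.eq t (σ t'), hB.eq t' t, smul_eq_mul]
    field_simp
    ring
  · rw [disjoint_def]
    rintro _ hperp ⟨t, rfl⟩
    have ht : (t : V) ∈ B.orthogonal U := by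
      simpa using sub_mem hperp (hU (hτU t))
    have : t = 0 := Subtype.ext (disjoint_def.1 hT.disjoint t ht t.2)
    simp [this]
  · rw [codisjoint_iff, ← sup_eq_left.2 hU, sup_assoc, hsup, ← sup_assoc, sup_eq_left.2 hU,
      hT.sup_eq_top]

theorem exists_isOrthogonal_extending [NeZero (2 : K)] [FiniteDimensional K U]
    (hB : B.IsSymm) (hU : U ≤ B.orthogonal U) (hrad : Disjoint U (LinearMap.ker B))
    (hT : IsCompl (B.orthogonal U) T) (f : U ≃ₗ[K] U)
    (γ : B.orthogonal (U ⊔ T) ≃ₗ[K] B.orthogonal (U ⊔ T))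
    (hγ : ∀ x y, B (γ x) (γ y) = B x y) :
    ∃ A : V ≃ₗ[K] V, B.IsOrthogonal A ∧ U.map A.toLinearMap = U ∧
      (U ⊔ T).map A.toLinearMap = U ⊔ T ∧ (∀ u : U, A u = f u) ∧
      ∀ x : B.orthogonal (U ⊔ T), A x = γ x := by
  have := isPerfPair_domRestrict₁₂ hB.isRefl hrad hT
  have hUTW := isCompl_sup_orthogonal hB.isRefl hU hrad hT
  obtain ⟨T', hT'iso, hT', hsup⟩ := exists_isotropic_isCompl hB hU hT
  have := isPerfPair_domRestrict₁₂ hB.isRefl hrad hT'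
  obtain ⟨g, hfg⟩ := exists_contragredient (B.domRestrict₁₂ U T') f
  obtain ⟨A, hA, hAU, hAT', hAW⟩ := exists_isOrthogonal_extending_of_isotropic hB hU hT'iso
    (orthogonal_le hsup.le) (hT'.disjoint.mono_left hU) (hsup ▸ hUTW) f g γ hfg hγ
  have hmapU := map_eq_self_of_forall_apply_eq f hAU
  have hmapT' := map_eq_self_of_forall_apply_eq g hAT'
  refine ⟨A, hA, hmapU, ?_, hAU, hAW⟩
  rw [← hsup, Submodule.map_sup, hmapU, hmapT']

theorem stmt6_general [NeZero (2 : K)] [FiniteDimensional K U] (hB : B.IsSymm)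
    (hrad : Disjoint U (LinearMap.ker B)) (hU : U ≤ B.orthogonal U)
    (hT : IsCompl (B.orthogonal U) T) :
    (∀ A : V ≃ₗ[K] V, B.IsOrthogonal A → U.map A.toLinearMap = U →
      (U ⊔ T).map A.toLinearMap = U ⊔ T →
      (B.orthogonal (U ⊔ T)).map A.toLinearMap = B.orthogonal (U ⊔ T)) ∧
    (∀ A : V ≃ₗ[K] V, B.IsOrthogonal A → U.map A.toLinearMap = U →
      (U ⊔ T).map A.toLinearMap = U ⊔ T →
      ∃ (f : U ≃ₗ[K] U) (γ : B.orthogonal (U ⊔ T) ≃ₗ[K] B.orthogonal (U ⊔ T)),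
        (∀ x y, B (γ x) (γ y) = B x y) ∧ (∀ u, (f u : V) = A u) ∧ ∀ x, (γ x : V) = A x) ∧
    (∀ A₁ A₂ : V ≃ₗ[K] V, ∀ f₁ f₂ : U ≃ₗ[K] U,
      ∀ γ₁ γ₂ : B.orthogonal (U ⊔ T) ≃ₗ[K] B.orthogonal (U ⊔ T),
      (∀ u, (f₁ u : V) = A₁ u) → (∀ u, (f₂ u : V) = A₂ u) →
      (∀ x, (γ₁ x : V) = A₁ x) → (∀ x, (γ₂ x : V) = A₂ x) →
      (∀ u, ((f₂ ≪≫ₗ f₁) u : V) = (A₂ ≪≫ₗ A₁) u) ∧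
      ∀ x, ((γ₂ ≪≫ₗ γ₁) x : V) = (A₂ ≪≫ₗ A₁) x) ∧
    (∀ (f : U ≃ₗ[K] U) (γ : B.orthogonal (U ⊔ T) ≃ₗ[K] B.orthogonal (U ⊔ T)),
      (∀ x y, B (γ x) (γ y) = B x y) →
      ∃ A : V ≃ₗ[K] V, B.IsOrthogonal A ∧ U.map A.toLinearMap = U ∧
        (U ⊔ T).map A.toLinearMap = U ⊔ T ∧ (∀ u : U, A u = f u) ∧
        ∀ x : B.orthogonal (U ⊔ T), A x = γ x) ∧
    (∀ A : V ≃ₗ[K] V, B.IsOrthogonal A → U.map A.toLinearMap = U →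
      (U ⊔ T).map A.toLinearMap = U ⊔ T →
      (((∀ u ∈ U, A u = u) ∧ ∀ x ∈ B.orthogonal (U ⊔ T), A x = x) ↔
        ∃ η : V →ₗ[K] V, (∀ v, η v ∈ U) ∧ (∀ x ∈ B.orthogonal U, η x = 0) ∧
          (∀ v v', B (η v) v' = -B v (η v')) ∧ ∀ v, A v = v - η v)) := by
  have hmapW (A : V ≃ₗ[K] V) (hA : B.IsOrthogonal A)
      (hAUT : (U ⊔ T).map A.toLinearMap = U ⊔ T) :
      (B.orthogonal (U ⊔ T)).map A.toLinearMap = B.orthogonal (U ⊔ T) := by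
    rw [map_orthogonal_of_isOrthogonal hA, hAUT]
  have hUT := (isCompl_sup_orthogonal hB.isRefl hU hrad hT).codisjoint
  refine ⟨fun A hA _ ↦ hmapW A hA, fun A hA hAU hAUT ↦ ?_, ?_,
    exists_isOrthogonal_extending hB hU hrad hT,
    fun A hA _ ↦ fixes_iff_exists_eq_sub hA hU hT hUT⟩
  · exact ⟨A.ofSubmodules U U hAU, A.ofSubmodules _ _ (hmapW A hA hAUT),
      fun x y ↦ hA x y, fun _ ↦ rfl, fun _ ↦ rfl⟩
  · intro A₁ A₂ f₁ f₂ γ₁ γ₂ hf₁ hf₂ hγ₁ hγ₂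
    simp [hf₁, hf₂, hγ₁, hγ₂]

end Field

/-- Let `U` be isotropic, `Ũ` a complement of `U^⊥`, and
`W̃ = (U + Ũ)^⊥`, and let `G = {A ∈ O(V) : A(U) = U, A(U + Ũ) = U + Ũ}`. Then every
`A ∈ G` satisfies `A(W̃) = W̃`; the assignment `A ↦ (A|_U, A|_W̃)` lands in
`GL(U) × O(W̃)`, is multiplicative (a group homomorphism), and is surjective onto
`GL(U) × O(W̃)`; and its kernel consists exactly of the maps `v ↦ v − η(v)` for
linear `η : V → U` vanishing on `U^⊥` with `(η v, v') = −(v, η v')`. -/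
theorem stmt6 {V : Type*} [AddCommGroup V] [Module ℚ V] [FiniteDimensional ℚ V]
    (Φ : V →ₗ[ℚ] V →ₗ[ℚ] ℚ)
    (hsymm : ∀ v w : V, Φ v w = Φ w v)
    (hnd : ∀ v : V, (∀ w : V, Φ v w = 0) → v = 0)
    (U Ut : Submodule ℚ V)
    (hUiso : ∀ u ∈ U, ∀ u' ∈ U, Φ u u' = 0)
    (hdisj : perp Φ U ⊓ Ut = ⊥) (hcompl : perp Φ U ⊔ Ut = ⊤) :
    -- (a) every A ∈ G preserves W̃ = (U + Ũ)^⊥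
    (∀ A : V ≃ₗ[ℚ] V, (∀ v w : V, Φ (A v) (A w) = Φ v w) →
      Submodule.map A.toLinearMap U = U →
      Submodule.map A.toLinearMap (U ⊔ Ut) = U ⊔ Ut →
      Submodule.map A.toLinearMap (perp Φ (U ⊔ Ut)) = perp Φ (U ⊔ Ut)) ∧
    -- (b) A restricts to an element of GL(U) and to an element of O(W̃)
    (∀ A : V ≃ₗ[ℚ] V, (∀ v w : V, Φ (A v) (A w) = Φ v w) →
      Submodule.map A.toLinearMap U = U →
      Submodule.map A.toLinearMap (U ⊔ Ut) = U ⊔ Ut →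
      ∃ (M : ↥U ≃ₗ[ℚ] ↥U)
        (γ : ↥(perp Φ (U ⊔ Ut)) ≃ₗ[ℚ] ↥(perp Φ (U ⊔ Ut))),
        (∀ x y : ↥(perp Φ (U ⊔ Ut)), Φ (γ x : V) (γ y : V) = Φ (x : V) (y : V)) ∧
        (∀ u : ↥U, (M u : V) = A (u : V)) ∧
        (∀ x : ↥(perp Φ (U ⊔ Ut)), (γ x : V) = A (x : V))) ∧
    -- (c) the assignment A ↦ (A|_U, A|_W̃) is multiplicative, i.e. a group hom
    (∀ A₁ A₂ : V ≃ₗ[ℚ] V, ∀ M₁ M₂ : ↥U ≃ₗ[ℚ] ↥U,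
      ∀ γ₁ γ₂ : ↥(perp Φ (U ⊔ Ut)) ≃ₗ[ℚ] ↥(perp Φ (U ⊔ Ut)),
      (∀ u : ↥U, (M₁ u : V) = A₁ (u : V)) →
      (∀ u : ↥U, (M₂ u : V) = A₂ (u : V)) →
      (∀ x : ↥(perp Φ (U ⊔ Ut)), (γ₁ x : V) = A₁ (x : V)) →
      (∀ x : ↥(perp Φ (U ⊔ Ut)), (γ₂ x : V) = A₂ (x : V)) →
      (∀ u : ↥U, ((M₂.trans M₁) u : V) = (A₂.trans A₁) (u : V)) ∧
      (∀ x : ↥(perp Φ (U ⊔ Ut)), ((γ₂.trans γ₁) x : V) = (A₂.trans A₁) (x : V))) ∧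
    -- (d) surjectivity onto GL(U) × O(W̃)
    (∀ (M : ↥U ≃ₗ[ℚ] ↥U) (γ : ↥(perp Φ (U ⊔ Ut)) ≃ₗ[ℚ] ↥(perp Φ (U ⊔ Ut))),
      (∀ x y : ↥(perp Φ (U ⊔ Ut)), Φ (γ x : V) (γ y : V) = Φ (x : V) (y : V)) →
      ∃ A : V ≃ₗ[ℚ] V, (∀ v w : V, Φ (A v) (A w) = Φ v w) ∧
        Submodule.map A.toLinearMap U = U ∧
        Submodule.map A.toLinearMap (U ⊔ Ut) = U ⊔ Ut ∧
        (∀ u : ↥U, A (u : V) = (M u : V)) ∧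
        (∀ x : ↥(perp Φ (U ⊔ Ut)), A (x : V) = (γ x : V))) ∧
    -- (e) kernel description
    (∀ A : V ≃ₗ[ℚ] V, (∀ v w : V, Φ (A v) (A w) = Φ v w) →
      Submodule.map A.toLinearMap U = U →
      Submodule.map A.toLinearMap (U ⊔ Ut) = U ⊔ Ut →
      (((∀ u ∈ U, A u = u) ∧ (∀ x ∈ perp Φ (U ⊔ Ut), A x = x)) ↔
        ∃ η : V →ₗ[ℚ] V, (∀ v : V, η v ∈ U) ∧ (∀ x ∈ perp Φ U, η x = 0) ∧
          (∀ v v' : V, Φ (η v) v' = - Φ v (η v')) ∧ (∀ v : V, A v = v - η v))) := by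
  have hker : LinearMap.ker Φ = ⊥ := LinearMap.separatingLeft_iff_ker_eq_bot.1 hnd
  exact stmt6_general ⟨hsymm⟩ (hker ▸ disjoint_bot_right) (fun u' hu' u hu ↦ hUiso u hu u' hu')
    ⟨disjoint_iff.2 hdisj, codisjoint_iff.2 hcompl⟩
end

section
/- Let U ⊆ V be an isotropic subspace and ψ : U^⊥ → U a ℚ-linear map with ψ(u) = 0 for every u ∈ U. Then there exists an isometry A ∈ O(V) such that A(u) = u for all u ∈ U and A(w) = w − ψ(w) for all w ∈ U^⊥. -/
/-!
Extend `ψ` to an endomorphism `N` of `V` with values in `U`, and let `M` be its adjoint. Then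
`X = M - N` is skew-adjoint, so its exponential is an isometry. Moreover `M` vanishes on `U^⊥`, so
that `X` agrees with `-ψ` there, and `X` moves each step of the flag `V ⊇ U^⊥ ⊇ U ⊇ 0` into the
next one. Hence `X ^ 3 = 0`, the exponential is the polynomial `1 + X + X ^ 2 / 2`, and on `U^⊥` the
quadratic term disappears.
-/

open Module LinearMap

section QuadExp

variable {R M : Type*} [CommRing R] [Invertible (2 : R)] [AddCommGroup M] [Module R M]

/-- The exponential series of an endomorphism, cut off after the quadratic term; this is the
exponential of `X` when `X ^ 3 = 0`. Unlike `IsNilpotent.exp`, it makes sense as soon as `2` is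
invertible. -/
def quadExp (X : End R M) : End R M :=
  1 + X + ⅟(2 : R) • X ^ 2

theorem quadExp_mul_quadExp_neg {X : End R M} (hX : X ^ 3 = 0) :
    quadExp X * quadExp (-X) = 1 := by
  set q : End R M := ⅟(2 : R) • X ^ 2 with hq
  have hqq : q + q = X ^ 2 := by rw [hq, ← add_smul, invOf_two_add_invOf_two, one_smul]
  have hq2 : q * q = 0 := by
    rw [hq, smul_mul_smul_comm, ← pow_add, pow_eq_zero_of_le (by decide) hX, smul_zero]
  have hcomm : Commute (1 + q) X :=
    (Commute.one_left X).add_left (((Commute.refl X).pow_left 2).smul_left _)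
  calc quadExp X * quadExp (-X)
      = (1 + q + X) * (1 + q - X) := by
        rw [quadExp, quadExp, neg_sq, ← hq, add_right_comm, add_right_comm 1 (-X), ← sub_eq_add_neg]
    _ = (1 + q) * (1 + q) - X * X := hcomm.mul_self_sub_mul_self_eq.symm
    _ = 1 + (q + q) + q * q - X ^ 2 := by noncomm_ring
    _ = 1 := by rw [hqq, hq2, add_zero, add_sub_cancel_right]

/-- The exponential of an endomorphism with vanishing cube, as an automorphism. -/
def quadExpEquiv (X : End R M) (hX : X ^ 3 = 0) : M ≃ₗ[R] M :=
  .ofLinearMap (quadExp X) (quadExp (-X)) (quadExp_mul_quadExp_neg hX) <| by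
    have hX' : (-X) ^ 3 = 0 := by rw [Odd.neg_pow (by decide), hX, neg_zero]
    have h := quadExp_mul_quadExp_neg hX'
    rwa [neg_neg] at h

theorem quadExpEquiv_apply_of_apply_apply_eq_zero {X : End R M} (hX : X ^ 3 = 0) {v : M}
    (hv : X (X v) = 0) : quadExpEquiv X hX v = v + X v := by
  change quadExp X v = v + X v
  simp [quadExp, pow_two, hv]

variable {B : LinearMap.BilinForm R M}

theorem isAdjointPair_quadExp {X Y : End R M} (h : IsAdjointPair B B X Y) :
    IsAdjointPair B B (quadExp X) (quadExp Y) := by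
  have hsq : IsAdjointPair B B (X ^ 2 : End R M) (Y ^ 2 : End R M) := by
    simpa only [pow_two] using h.mul h
  exact (isAdjointPair_one.add h).add (hsq.smul ⅟(2 : R))

theorem isOrthogonal_quadExpEquiv {X : End R M} (hX : X ^ 3 = 0) (hskew : B.IsSkewAdjoint X) :
    B.IsOrthogonal (quadExpEquiv X hX) :=
  LinearEquiv.isAdjointPair_symm_iff (f := (quadExpEquiv X hX).toEquiv).mp
    (isAdjointPair_quadExp (Y := -X) hskew)

end QuadExp

section Adjoint

variable {R V : Type*} [CommRing R] [AddCommGroup V] [Module R V]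
  {B : LinearMap.BilinForm R V} {U : Submodule R V} {M N : End R V}

theorem isSkewAdjoint_sub_of_isAdjointPair (hB : B.IsSymm) (hMN : IsAdjointPair B B M N) :
    B.IsSkewAdjoint (M - N) := by
  have hNM : IsAdjointPair B B N M := fun v w ↦ by rw [hB.eq, ← hMN, hB.eq]
  simpa [IsSkewAdjoint] using hMN.sub hNM

theorem range_le_orthogonal_of_isAdjointPair (hB : B.IsRefl) (hMN : IsAdjointPair B B M N)
    (hN : U ≤ ker N) : range M ≤ B.orthogonal U := by
  rintro _ ⟨v, rfl⟩ u hu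
  exact hB _ _ (by rw [hMN, mem_ker.mp (hN hu), map_zero])

theorem orthogonal_le_ker_of_isAdjointPair (hB : B.IsRefl) (hsep : B.SeparatingLeft)
    (hMN : IsAdjointPair B B M N) (hN : range N ≤ U) : B.orthogonal U ≤ ker M := by
  intro w hw
  refine hsep (M w) fun z ↦ ?_
  rw [hMN]
  exact hB _ _ (hw (N z) (hN (mem_range_self N z)))

end Adjoint

section Field

variable {K V : Type*} [Field K] [AddCommGroup V] [Module K V] [FiniteDimensional K V]
  {B : LinearMap.BilinForm K V} {U : Submodule K V}

theorem exists_isSkewAdjoint_eq_neg_on_orthogonal (hB : B.IsSymm) (hnd : B.Nondegenerate)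
    (hU : U ≤ B.orthogonal U) (ψ : B.orthogonal U →ₗ[K] U)
    (hψ : ∀ w : B.orthogonal U, (w : V) ∈ U → ψ w = 0) :
    ∃ X : End K V, B.IsSkewAdjoint X ∧ range X ≤ B.orthogonal U ∧
      ∀ w : B.orthogonal U, X w = -ψ w := by
  obtain ⟨ψ', hψ'⟩ := ψ.exists_extend
  let N : End K V := U.subtype ∘ₗ ψ'
  let M : End K V := B.leftAdjointOfNondegenerate hnd N
  have hMN : IsAdjointPair B B M N := B.isAdjointPairLeftAdjointOfNondegenerate hnd N
  have hNψ (w : B.orthogonal U) : N w = ψ w := congrArg Subtype.val (LinearMap.congr_fun hψ' w)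
  have hNrange : range N ≤ U := by
    rintro _ ⟨v, rfl⟩
    exact (ψ' v).2
  have hNker : U ≤ ker N := fun u hu ↦ by
    rw [mem_ker, hNψ ⟨u, hU hu⟩, hψ _ hu, Submodule.coe_zero]
  have hMker : B.orthogonal U ≤ ker M :=
    orthogonal_le_ker_of_isAdjointPair hB.isRefl hnd.1 hMN hNrange
  have hMrange : range M ≤ B.orthogonal U :=
    range_le_orthogonal_of_isAdjointPair hB.isRefl hMN hNker
  refine ⟨M - N, isSkewAdjoint_sub_of_isAdjointPair hB hMN, ?_, fun w ↦ ?_⟩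
  · rintro _ ⟨v, rfl⟩
    exact sub_mem (hMrange (mem_range_self M v)) (hU (hNrange (mem_range_self N v)))
  · rw [LinearMap.sub_apply, mem_ker.mp (hMker w.2), hNψ, zero_sub]

theorem stmt7_general [NeZero (2 : K)] (hB : B.IsSymm) (hnd : B.Nondegenerate)
    (hU : U ≤ B.orthogonal U) (ψ : B.orthogonal U →ₗ[K] U)
    (hψ : ∀ w : B.orthogonal U, (w : V) ∈ U → ψ w = 0) :
    ∃ A : V ≃ₗ[K] V, B.IsOrthogonal A ∧ (∀ u ∈ U, A u = u) ∧
      ∀ w : B.orthogonal U, A w = w - ψ w := by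
  let _ : Invertible (2 : K) := invertibleOfNonzero two_ne_zero
  obtain ⟨X, hskew, hXrange, hXψ⟩ := exists_isSkewAdjoint_eq_neg_on_orthogonal hB hnd hU ψ hψ
  have hXU (u : V) (hu : u ∈ U) : X u = 0 := by
    rw [hXψ ⟨u, hU hu⟩, hψ _ hu, Submodule.coe_zero, neg_zero]
  have hXX (w : B.orthogonal U) : X (X w) = 0 := hXU _ (hXψ w ▸ neg_mem (ψ w).2)
  have hX3 : X ^ 3 = 0 := LinearMap.ext fun v ↦ hXX ⟨X v, hXrange (mem_range_self X v)⟩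
  have hA (w : B.orthogonal U) : quadExpEquiv X hX3 w = w + X w :=
    quadExpEquiv_apply_of_apply_apply_eq_zero hX3 (hXX w)
  refine ⟨quadExpEquiv X hX3, isOrthogonal_quadExpEquiv hX3 hskew, fun u hu ↦ ?_, fun w ↦ ?_⟩
  · rw [hA ⟨u, hU hu⟩, hXU u hu, add_zero]
  · rw [hA, hXψ, sub_eq_add_neg]

end Field

/-- If `U` is isotropic and `ψ : U^⊥ → U` is linear with `ψ(u) = 0`
for `u ∈ U`, then there exists `A ∈ O(V)` with `A(u) = u` on `U` and
`A(w) = w − ψ(w)` on `U^⊥`. -/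
theorem stmt7 {V : Type*} [AddCommGroup V] [Module ℚ V] [FiniteDimensional ℚ V]
    (Φ : V →ₗ[ℚ] V →ₗ[ℚ] ℚ)
    (hsymm : ∀ v w : V, Φ v w = Φ w v)
    (hnd : ∀ v : V, (∀ w : V, Φ v w = 0) → v = 0)
    (U : Submodule ℚ V)
    (hUiso : ∀ u ∈ U, ∀ u' ∈ U, Φ u u' = 0)
    (ψ : ↥(perp Φ U) →ₗ[ℚ] V)
    (hψU : ∀ w : ↥(perp Φ U), ψ w ∈ U)
    (hψ0 : ∀ w : ↥(perp Φ U), (w : V) ∈ U → ψ w = 0) :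
    ∃ A : V ≃ₗ[ℚ] V,
      (∀ v w : V, Φ (A v) (A w) = Φ v w) ∧
      (∀ u ∈ U, A u = u) ∧
      (∀ w : ↥(perp Φ U), A (w : V) = (w : V) - ψ w) :=
  have hΦ : LinearMap.BilinForm.IsSymm Φ := ⟨hsymm⟩
  -- `perp Φ U` and `Φ.orthogonal U` unfold to the same submodule.
  stmt7_general hΦ (hΦ.isRefl.nondegenerate_iff_separatingLeft.mpr hnd)
    (fun u hu u' hu' ↦ hUiso u' hu' u hu) (ψ.codRestrict U hψU) fun w hw ↦ Subtype.ext (hψ0 w hw)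
end

section
/- Let U ⊆ V be a 2-dimensional isotropic subspace with basis (z, w). If A ∈ O(V) satisfies A(x) = x for every x ∈ U^⊥, then there exists a scalar t ∈ ℚ such that A(v) − v = t·((v, w)·z − (v, z)·w) for every v ∈ V. (This expresses that the space of anti-symmetric homomorphisms U* → U is 1-dimensional when dim U = 2.) -/
/-!
Write `D = A - 1`. Since `A` is an isometry fixing `U^⊥`, `D` takes values in `U^⊥⊥`, which is
isotropic because `U` is. Expanding `Φ (D v) (D v) = 0` gives `2 Φ (D v) v = 0`, so
`(u, v) ↦ Φ (D u) v` is an alternating form. Its radical contains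
`U^⊥ = ker Φ(z, ·) ∩ ker Φ(w, ·)`, and an alternating form whose radical contains the common kernel
of two functionals is a scalar multiple of their wedge product. Nondegeneracy of `Φ` turns this
identity of forms into the formula for `D`.
-/

open LinearMap (ker BilinForm)
open LinearMap.BilinForm (orthogonal_le)

section Wedge

variable {R M : Type*} [CommRing R] [AddCommGroup M] [Module R M]

/-- The wedge product `φ ∧ ψ` of two linear functionals, as the bilinear form
`(u, v) ↦ φ u * ψ v - ψ u * φ v`; over a field it spans the alternating forms whose radical
contains `ker φ ⊓ ker ψ`. -/
def wedge (φ ψ : Module.Dual R M) : BilinForm R M :=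
  BilinForm.linMulLin φ ψ - BilinForm.linMulLin ψ φ

theorem wedge_apply (φ ψ : Module.Dual R M) (u v : M) :
    wedge φ ψ u v = φ u * ψ v - ψ u * φ v := rfl

theorem wedge_cramer_mem_ker_inf_ker (φ ψ : Module.Dual R M) (e f v : M) :
    wedge φ ψ e f • v - (wedge φ ψ v f • e + wedge φ ψ e v • f) ∈ ker φ ⊓ ker ψ := by
  simp only [Submodule.mem_inf, LinearMap.mem_ker, map_sub, map_add, map_smul, smul_eq_mul,
    wedge_apply]
  constructor <;> ring

theorem wedge_smul_apply_of_ker_inf_ker_le {N : Type*} [AddCommGroup N] [Module R N]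
    {φ ψ : Module.Dual R M} {g : M →ₗ[R] N} (hg : ker φ ⊓ ker ψ ≤ ker g) (e f v : M) :
    wedge φ ψ e f • g v = wedge φ ψ v f • g e + wedge φ ψ e v • g f := by
  have h : g (wedge φ ψ e f • v - (wedge φ ψ v f • e + wedge φ ψ e v • f)) = 0 :=
    hg (wedge_cramer_mem_ker_inf_ker φ ψ e f v)
  simpa only [map_sub, map_add, map_smul, sub_eq_zero] using h

variable [NoZeroDivisors R] {φ ψ : Module.Dual R M} {B : BilinForm R M}

theorem wedge_mul_apply_of_isAlt (hB : B.IsAlt) (hker : ker φ ⊓ ker ψ ≤ ker B) {e f : M}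
    (hef : wedge φ ψ e f ≠ 0) (u v : M) :
    wedge φ ψ e f * B u v = B e f * wedge φ ψ u v := by
  have expand (x y : M) :
      wedge φ ψ e f * B x y = wedge φ ψ x f * B e y + wedge φ ψ e x * B f y :=
    LinearMap.congr_fun (wedge_smul_apply_of_ker_inf_ker_le hker e f x) y
  have hev : wedge φ ψ e f * B e v = wedge φ ψ e v * B e f := by
    rw [← hB.neg_eq v e, ← hB.neg_eq f e, mul_neg, expand, hB.self_eq_zero]
    ring
  have hfv : wedge φ ψ e f * B f v = -(wedge φ ψ v f * B e f) := by
    rw [← hB.neg_eq v f, mul_neg, expand, hB.self_eq_zero]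
    ring
  have plucker : wedge φ ψ u f * wedge φ ψ e v - wedge φ ψ e u * wedge φ ψ v f =
      wedge φ ψ e f * wedge φ ψ u v := by
    simp only [wedge_apply]
    ring
  apply mul_left_cancel₀ hef
  linear_combination wedge φ ψ e f * expand u v + wedge φ ψ u f * hev + wedge φ ψ e u * hfv +
    B e f * plucker

theorem eq_zero_of_isAlt_of_wedge_eq_zero (hB : B.IsAlt) (hker : ker φ ⊓ ker ψ ≤ ker B)
    (hwedge : wedge φ ψ = 0) : B = 0 := by
  ext u v
  by_contra huv
  have vanish {χ : Module.Dual R M} (hχ : χ u • v - χ v • u ∈ ker φ ⊓ ker ψ) : χ u = 0 := by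
    have h : B (χ u • v - χ v • u) u = 0 := LinearMap.congr_fun (hker hχ) u
    simp only [map_sub, map_smul, LinearMap.sub_apply, LinearMap.smul_apply, smul_eq_mul,
      hB.self_eq_zero, mul_zero, sub_zero, mul_eq_zero] at h
    exact h.resolve_right fun hvu ↦ huv (hB.isRefl v u hvu)
  have hdet : φ u * ψ v - ψ u * φ v = 0 := LinearMap.congr_fun₂ hwedge u v
  have hφ : φ u = 0 := vanish <| by
    simp only [Submodule.mem_inf, LinearMap.mem_ker, map_sub, map_smul, smul_eq_mul]
    exact ⟨by ring, by linear_combination hdet⟩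
  have hψ : ψ u = 0 := vanish <| by
    simp only [Submodule.mem_inf, LinearMap.mem_ker, map_sub, map_smul, smul_eq_mul]
    exact ⟨by linear_combination -hdet, by ring⟩
  exact huv (LinearMap.congr_fun (hker ⟨hφ, hψ⟩) v)

end Wedge

theorem exists_eq_smul_wedge_of_isAlt {K V : Type*} [Field K] [AddCommGroup V] [Module K V]
    {φ ψ : Module.Dual K V} {B : BilinForm K V} (hB : B.IsAlt)
    (hker : ker φ ⊓ ker ψ ≤ ker B) : ∃ t : K, B = t • wedge φ ψ := by
  by_cases hwedge : wedge φ ψ = 0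
  · exact ⟨0, by rw [zero_smul, eq_zero_of_isAlt_of_wedge_eq_zero hB hker hwedge]⟩
  · obtain ⟨e, f, hef⟩ : ∃ e f, wedge φ ψ e f ≠ 0 := by
      contrapose! hwedge
      ext u v
      exact hwedge u v
    refine ⟨B e f / wedge φ ψ e f, ?_⟩
    ext u v
    rw [LinearMap.smul_apply, LinearMap.smul_apply, smul_eq_mul, div_mul_eq_mul_div,
      eq_div_iff hef, mul_comm, wedge_mul_apply_of_isAlt hB hker hef]

section Isometry

variable {R M : Type*} [CommRing R] [AddCommGroup M] [Module R M] {Φ : BilinForm R M}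
  {A : Module.End R M}

theorem orthogonal_span_pair (Φ : BilinForm R M) (x y : M) :
    Φ.orthogonal (Submodule.span R {x, y}) = ker (Φ x) ⊓ ker (Φ y) := by
  ext v
  constructor
  · intro hv
    exact ⟨hv x (Submodule.mem_span_of_mem (.inl rfl)), hv y (Submodule.mem_span_of_mem (.inr rfl))⟩
  · rintro ⟨hx : Φ x v = 0, hy : Φ y v = 0⟩ u hu
    obtain ⟨a, b, rfl⟩ := Submodule.mem_span_pair.mp hu
    simp [hx, hy]

theorem sub_self_mem_orthogonal_of_fixed (hA : Φ.IsOrthogonal A) {N : Submodule R M}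
    (hfix : ∀ x ∈ N, A x = x) (v : M) : A v - v ∈ Φ.orthogonal N := by
  intro x hx
  calc Φ x (A v - v) = Φ (A x) (A v) - Φ x v := by rw [map_sub, hfix x hx]
    _ = 0 := by rw [hA, sub_self]

theorem apply_sub_self_sub_self (hsymm : Φ.IsSymm) (hA : Φ.IsOrthogonal A) (v : M) :
    Φ (A v - v) (A v - v) = -(2 * Φ (A v - v) v) := by
  simp only [map_sub, LinearMap.sub_apply, hA v v, hsymm.eq v (A v)]
  ring

theorem isAlt_compLeft_sub_one [NoZeroDivisors R] [NeZero (2 : R)] (hsymm : Φ.IsSymm)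
    (hA : Φ.IsOrthogonal A) (hiso : ∀ v, Φ (A v - v) (A v - v) = 0) :
    (Φ.compLeft (A - 1)).IsAlt := by
  intro v
  have h : 2 * Φ (A v - v) v = 0 := by
    rw [← neg_eq_zero, ← apply_sub_self_sub_self hsymm hA, hiso]
  exact (mul_eq_zero.mp h).resolve_left two_ne_zero

theorem apply_sub_self_sub_self_eq_zero_of_fixed (hA : Φ.IsOrthogonal A) {U : Submodule R M}
    (hU : U ≤ Φ.orthogonal U) (hfix : ∀ x ∈ Φ.orthogonal U, A x = x) (v : M) :
    Φ (A v - v) (A v - v) = 0 := by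
  have hmem : A v - v ∈ Φ.orthogonal (Φ.orthogonal U) := sub_self_mem_orthogonal_of_fixed hA hfix v
  exact orthogonal_le (orthogonal_le hU) hmem _ hmem

end Isometry

theorem stmt9_general {K V : Type*} [Field K] [NeZero (2 : K)] [AddCommGroup V] [Module K V]
    {Φ : BilinForm K V} (hsymm : Φ.IsSymm) (hnd : Φ.SeparatingLeft) {z w : V}
    (hiso : Submodule.span K {z, w} ≤ Φ.orthogonal (Submodule.span K {z, w}))
    {A : Module.End K V} (hA : Φ.IsOrthogonal A)
    (hfix : ∀ x ∈ Φ.orthogonal (Submodule.span K {z, w}), A x = x) :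
    ∃ t : K, ∀ v : V, A v - v = t • (Φ v w • z - Φ v z • w) := by
  have halt : (Φ.compLeft (A - 1)).IsAlt :=
    isAlt_compLeft_sub_one hsymm hA (apply_sub_self_sub_self_eq_zero_of_fixed hA hiso hfix)
  have hker : ker (Φ w) ⊓ ker (Φ z) ≤ ker (Φ.compLeft (A - 1)) := by
    rw [inf_comm, ← orthogonal_span_pair]
    intro x hx
    ext y
    simp [hfix x hx]
  obtain ⟨t, ht⟩ := exists_eq_smul_wedge_of_isAlt halt hker
  refine ⟨t, fun v ↦ sub_eq_zero.mp (hnd _ fun y ↦ ?_)⟩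
  have hvy : Φ (A v - v) y = t * (Φ w v * Φ z y - Φ z v * Φ w y) := LinearMap.congr_fun₂ ht v y
  rw [map_sub, LinearMap.sub_apply, hvy, hsymm.eq w v, hsymm.eq z v]
  simp

/-- Let `U` be a 2-dimensional isotropic subspace with basis
`(z, w)`. If `A ∈ O(V)` fixes `U^⊥` pointwise, then there is `t ∈ ℚ` with
`A(v) − v = t·((v, w)·z − (v, z)·w)` for every `v`; i.e. the space of
anti-symmetric homomorphisms `U* → U` is 1-dimensional. -/
theorem stmt9 {V : Type*} [AddCommGroup V] [Module ℚ V] [FiniteDimensional ℚ V]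
    (Φ : V →ₗ[ℚ] V →ₗ[ℚ] ℚ)
    (hsymm : ∀ v w : V, Φ v w = Φ w v)
    (hnd : ∀ v : V, (∀ w : V, Φ v w = 0) → v = 0)
    (U : Submodule ℚ V)
    (hUiso : ∀ u ∈ U, ∀ u' ∈ U, Φ u u' = 0)
    (z w : V) (hzU : z ∈ U) (hwU : w ∈ U)
    (hindep : LinearIndependent ℚ ![z, w])
    (hUspan : U = Submodule.span ℚ {z, w})
    (A : V ≃ₗ[ℚ] V) (hA : ∀ v v' : V, Φ (A v) (A v') = Φ v v')
    (hfix : ∀ x ∈ perp Φ U, A x = x) :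
    ∃ t : ℚ, ∀ v : V, A v - v = t • ((Φ v w) • z - (Φ v z) • w) := by
  subst hUspan
  exact stmt9_general ⟨hsymm⟩ hnd (fun u hu u' hu' ↦ hUiso u' hu' u hu) (A := A) hA hfix
end

section
/- Let U ⊆ V be an isotropic subspace and A ∈ O(V) with A(U) = U. Let γ_A be the induced linear automorphism of the quotient space W = U^⊥/U. Then det(A) = det(γ_A). -/
/-!
Along the `A`-stable flag `0 ⊆ U ⊆ U^⊥ ⊆ V` the determinant factors as
`det A = det (A|_U) * det γ_A * det (A|_{V/U^⊥})`. The form induces a perfect pairing between `U`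
and `V/U^⊥`, which `A` preserves, so `A` acts on `V/U^⊥` as the inverse transpose of `A|_U` and the
two outer factors cancel.
-/

theorem det_mul_det_eq_one_of_isPerfPair {R M N : Type*} [CommRing R]
    [AddCommGroup M] [Module R M] [Module.Free R M] [Module.Finite R M]
    [AddCommGroup N] [Module R N] (p : M →ₗ[R] N →ₗ[R] R) [p.IsPerfPair]
    {f : M →ₗ[R] M} {g : N →ₗ[R] N} (h : ∀ m n, p (f m) (g n) = p m n) :
    f.det * g.det = 1 := by
  let e : N ≃ₗ[R] Module.Dual R M := p.flip.toPerfPair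
  have transpose_comp : f.dualMap ∘ₗ (e.toLinearMap ∘ₗ g ∘ₗ e.symm.toLinearMap) = .id := by
    refine LinearMap.ext fun φ ↦ ?_
    obtain ⟨n, rfl⟩ := e.surjective φ
    ext m
    calc e (g (e.symm (e n))) (f m) = p (f m) (g n) := by rw [e.symm_apply_apply]; rfl
      _ = p m n := h m n
  calc f.det * g.det
      = f.dualMap.det * (e.toLinearMap ∘ₗ g ∘ₗ e.symm.toLinearMap).det := by
        rw [LinearMap.det_dualMap, LinearMap.det_conj]
    _ = 1 := by rw [← LinearMap.det_comp, transpose_comp, LinearMap.det_id]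

section Subquotient

variable {R M : Type*} [Ring R] [AddCommGroup M] [Module R M] {U P : Submodule R M}

theorem comap_subtype_le_comap_restrict {f : M →ₗ[R] M} (hU : U ≤ U.comap f)
    (hP : P ≤ P.comap f) :
    U.comap P.subtype ≤ (U.comap P.subtype).comap (f.restrict hP) :=
  fun _ hx ↦ hU hx

/-- The endomorphism of the subquotient `P / U` induced by an endomorphism `f` stabilizing `U`
and `P`, where `P / U` is encoded as the quotient of `P` by the preimage of `U` in `P`. -/
def subquotientMap (f : M →ₗ[R] M) (hU : U ≤ U.comap f) (hP : P ≤ P.comap f) :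
    (P ⧸ U.comap P.subtype) →ₗ[R] (P ⧸ U.comap P.subtype) :=
  Submodule.mapQ _ _ (f.restrict hP) (comap_subtype_le_comap_restrict hU hP)

theorem eq_subquotientMap_of_apply_mk {f : M →ₗ[R] M} (hU : U ≤ U.comap f) (hP : P ≤ P.comap f)
    {γ : (P ⧸ U.comap P.subtype) →ₗ[R] (P ⧸ U.comap P.subtype)}
    (hγ : ∀ w x : P, (x : M) = f w → γ (Submodule.Quotient.mk w) = Submodule.Quotient.mk x) :
    γ = subquotientMap f hU hP :=
  Submodule.linearMap_qext _ (LinearMap.ext fun w ↦ hγ w (f.restrict hP w) rfl)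

theorem map_ofSubmodules_comap_subtype {Q : Submodule R M} (A : M ≃ₗ[R] M)
    (hPQ : P.map A.toLinearMap = Q) :
    (U.comap P.subtype).map (A.ofSubmodules P Q hPQ).toLinearMap =
      (U.map A.toLinearMap).comap Q.subtype := by
  ext x
  obtain ⟨w, rfl⟩ := (A.ofSubmodules P Q hPQ).surjective x
  exact (A.ofSubmodules P Q hPQ).injective.mem_set_image.trans A.injective.mem_set_image.symm

/-- The automorphism of the subquotient `P / U` induced by an automorphism `A` with `A(U) = U` and
`A(P) = P`, with `P / U` encoded as in `subquotientMap`. -/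
def subquotientEquiv (A : M ≃ₗ[R] M) (hU : U.map A.toLinearMap = U)
    (hP : P.map A.toLinearMap = P) :
    (P ⧸ U.comap P.subtype) ≃ₗ[R] (P ⧸ U.comap P.subtype) :=
  Submodule.Quotient.equiv _ _ (A.ofSubmodules P P hP) <|
    (map_ofSubmodules_comap_subtype A hP).trans (by rw [hU])

end Subquotient

theorem det_restrict_comap_subtype {R M : Type*} [CommRing R] [AddCommGroup M] [Module R M]
    {U P : Submodule R M} {f : M →ₗ[R] M} (hUP : U ≤ P) (hU : U ≤ U.comap f)
    (hP : P ≤ P.comap f) :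
    ((f.restrict hP).restrict (comap_subtype_le_comap_restrict hU hP)).det =
      (f.restrict hU).det :=
  (LinearMap.det_conj _ (Submodule.comapSubtypeEquivOfLe hUP)).symm

theorem det_eq_det_restrict_mul_det_subquotientMap_mul_det_mapQ {K V : Type*} [Field K]
    [AddCommGroup V] [Module K V] [FiniteDimensional K V] {U P : Submodule K V}
    {f : V →ₗ[K] V} (hUP : U ≤ P) (hU : U ≤ U.comap f) (hP : P ≤ P.comap f) :
    f.det = (f.restrict hU).det * (subquotientMap f hU hP).det * (P.mapQ P f hP).det := by
  rw [f.det_eq_det_mul_det P hP,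
    (f.restrict hP).det_eq_det_mul_det _ (comap_subtype_le_comap_restrict hU hP),
    det_restrict_comap_subtype hUP hU hP, subquotientMap]

section Orthogonal

variable {R M : Type*} [CommRing R] [AddCommGroup M] [Module R M]
  (B : M →ₗ[R] M →ₗ[R] R) (U : Submodule R M)

theorem map_orthogonalBilin {A : M ≃ₗ[R] M} (hA : B.IsOrthogonal A) :
    (U.orthogonalBilin B).map A.toLinearMap = (U.map A.toLinearMap).orthogonalBilin B := by
  ext x
  obtain ⟨w, rfl⟩ := A.surjective x
  calc A w ∈ (U.orthogonalBilin B).map A.toLinearMap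
      ↔ w ∈ U.orthogonalBilin B := A.injective.mem_set_image
    _ ↔ ∀ u ∈ U, B (A u) (A w) = 0 := by simp only [Submodule.mem_orthogonalBilin_iff, hA _ _]
    _ ↔ A w ∈ (U.map A.toLinearMap).orthogonalBilin B :=
      (Set.forall_mem_image (f := A) (p := fun y ↦ B y (A w) = 0)).symm

/-- The pairing `U × M/U^⊥ → R` induced by the bilinear form `B`. In finite dimension it identifies
`M/U^⊥` with the dual of `U` as soon as `U` meets the left radical `ker B` trivially. -/
def orthogonalQuotientPairing : U →ₗ[R] (M ⧸ U.orthogonalBilin B) →ₗ[R] R :=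
  ((U.orthogonalBilin B).liftQ (B.domRestrict U).flip
    fun _ hv ↦ LinearMap.ext fun u ↦ hv u u.2).flip

theorem orthogonalQuotientPairing_injective (hB : Disjoint U B.ker) :
    Function.Injective (orthogonalQuotientPairing B U) := by
  rw [injective_iff_map_eq_zero]
  intro u hu
  have hu_ker : (u : M) ∈ B.ker :=
    LinearMap.ext fun v ↦ LinearMap.congr_fun hu (Submodule.Quotient.mk v)
  exact Subtype.ext (Submodule.disjoint_def.mp hB u u.2 hu_ker)

theorem orthogonalQuotientPairing_flip_injective :
    Function.Injective (orthogonalQuotientPairing B U).flip := by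
  rw [injective_iff_map_eq_zero]
  intro q hq
  obtain ⟨v, rfl⟩ := Submodule.Quotient.mk_surjective _ q
  exact (Submodule.Quotient.mk_eq_zero _).mpr fun u hu ↦ LinearMap.congr_fun hq ⟨u, hu⟩

end Orthogonal

section FiniteDimensional

variable {K V : Type*} [Field K] [AddCommGroup V] [Module K V] [FiniteDimensional K V]
  (B : V →ₗ[K] V →ₗ[K] K) (U : Submodule K V)

theorem det_restrict_mul_det_mapQ_orthogonalBilin {f : V →ₗ[K] V} (hf : B.IsOrthogonal f)
    (hB : Disjoint U B.ker) (hU : U ≤ U.comap f)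
    (hP : U.orthogonalBilin B ≤ (U.orthogonalBilin B).comap f) :
    (f.restrict hU).det * ((U.orthogonalBilin B).mapQ _ f hP).det = 1 := by
  have : (orthogonalQuotientPairing B U).IsPerfPair :=
    .of_injective (orthogonalQuotientPairing_injective B U hB)
      (orthogonalQuotientPairing_flip_injective B U)
  refine det_mul_det_eq_one_of_isPerfPair (orthogonalQuotientPairing B U) fun u q ↦ ?_
  obtain ⟨v, rfl⟩ := Submodule.Quotient.mk_surjective _ q
  exact hf u v

theorem det_eq_det_subquotientMap_orthogonalBilin {f : V →ₗ[K] V} (hf : B.IsOrthogonal f)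
    (hB : Disjoint U B.ker) (hUiso : U ≤ U.orthogonalBilin B) (hU : U ≤ U.comap f)
    (hP : U.orthogonalBilin B ≤ (U.orthogonalBilin B).comap f) :
    f.det = (subquotientMap f hU hP).det := by
  rw [det_eq_det_restrict_mul_det_subquotientMap_mul_det_mapQ hUiso hU hP, mul_right_comm,
    det_restrict_mul_det_mapQ_orthogonalBilin B U hf hB hU hP, one_mul]

theorem stmt10_general (A : V ≃ₗ[K] V) (hA : B.IsOrthogonal A)
    (hB : Disjoint U B.ker) (hUiso : U ≤ U.orthogonalBilin B)
    (hAU : U.map A.toLinearMap = U) :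
    (∃ γ : (U.orthogonalBilin B ⧸ U.comap (U.orthogonalBilin B).subtype) ≃ₗ[K]
           (U.orthogonalBilin B ⧸ U.comap (U.orthogonalBilin B).subtype),
       ∀ w x : U.orthogonalBilin B, (x : V) = A w →
         γ (Submodule.Quotient.mk w) = Submodule.Quotient.mk x) ∧
    (∀ γ : (U.orthogonalBilin B ⧸ U.comap (U.orthogonalBilin B).subtype) ≃ₗ[K]
           (U.orthogonalBilin B ⧸ U.comap (U.orthogonalBilin B).subtype),
       (∀ w x : U.orthogonalBilin B, (x : V) = A w →
         γ (Submodule.Quotient.mk w) = Submodule.Quotient.mk x) →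
       A.toLinearMap.det = γ.toLinearMap.det) := by
  have hAP : (U.orthogonalBilin B).map A.toLinearMap = U.orthogonalBilin B := by
    rw [map_orthogonalBilin B U hA, hAU]
  refine ⟨⟨subquotientEquiv A hAU hAP, fun w x hx ↦ ?_⟩, fun γ hγ ↦ ?_⟩
  · exact congrArg Submodule.Quotient.mk (Subtype.ext hx.symm)
  · have hU := Submodule.map_le_iff_le_comap.mp hAU.le
    have hP := Submodule.map_le_iff_le_comap.mp hAP.le
    rw [eq_subquotientMap_of_apply_mk hU hP hγ]
    exact det_eq_det_subquotientMap_orthogonalBilin B U hA hB hUiso hU hP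

end FiniteDimensional

/-- If `U` is isotropic and `A ∈ O(V)` satisfies `A(U) = U`, and
`γ_A` is the induced linear automorphism of `W = U^⊥/U` (realized as the quotient
of `U^⊥` by the preimage of `U`), then `det A = det γ_A`. -/
theorem stmt10 {V : Type*} [AddCommGroup V] [Module ℚ V] [FiniteDimensional ℚ V]
    (Φ : V →ₗ[ℚ] V →ₗ[ℚ] ℚ)
    (hsymm : ∀ v w : V, Φ v w = Φ w v)
    (hnd : ∀ v : V, (∀ w : V, Φ v w = 0) → v = 0)
    (U : Submodule ℚ V)
    (hUiso : ∀ u ∈ U, ∀ u' ∈ U, Φ u u' = 0)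
    (A : V ≃ₗ[ℚ] V) (hA : ∀ v w : V, Φ (A v) (A w) = Φ v w)
    (hAU : Submodule.map A.toLinearMap U = U) :
    -- the induced automorphism γ_A of W = U^⊥/U exists ...
    (∃ γ : (↥(perp Φ U) ⧸ Submodule.comap (perp Φ U).subtype U) ≃ₗ[ℚ]
           (↥(perp Φ U) ⧸ Submodule.comap (perp Φ U).subtype U),
       ∀ w x : ↥(perp Φ U), (x : V) = A (w : V) →
         γ (Submodule.Quotient.mk w) = Submodule.Quotient.mk x) ∧
    -- ... and for any such γ_A one has det A = det γ_A
    (∀ γ : (↥(perp Φ U) ⧸ Submodule.comap (perp Φ U).subtype U) ≃ₗ[ℚ]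
           (↥(perp Φ U) ⧸ Submodule.comap (perp Φ U).subtype U),
       (∀ w x : ↥(perp Φ U), (x : V) = A (w : V) →
         γ (Submodule.Quotient.mk w) = Submodule.Quotient.mk x) →
       LinearMap.det A.toLinearMap = LinearMap.det γ.toLinearMap) :=
  stmt10_general Φ U A hA (LinearMap.separatingLeft_iff_ker_eq_bot.mp hnd ▸ disjoint_bot_right)
    (fun u' hu' u hu ↦ hUiso u hu u' hu') hAU
end

section
/- Let L be an even lattice in V, U ⊆ V an isotropic subspace, and I = U ∩ L. Then there exists a ℤ-submodule Ĩ ⊆ L* such that (ĩ, λ) ∈ ℤ for all ĩ ∈ Ĩ and λ ∈ I, and such that for every ℤ-linear map f : I → ℤ there is a unique ĩ ∈ Ĩ with (ĩ, λ) = f(λ) for all λ ∈ I (i.e. the pairing between Ĩ and I is unimodular). Moreover any such Ĩ is primitive in L*: (ℚ-span of Ĩ) ∩ L* = Ĩ. -/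
/-- The dual lattice \`L* = {v ∈ V : (v, L) ⊆ ℤ}\` of \`L\`, as a subset of \`V\`. -/
def dualL {V : Type*} [AddCommGroup V] [Module ℚ V]
    (Φ : V →ₗ[ℚ] V →ₗ[ℚ] ℚ) (L : Submodule ℤ V) : Set V :=
  {v | ∀ x ∈ L, ∃ n : ℤ, Φ v x = (n : ℚ)}

/-- The pairing between the ℤ-submodules \`It\` and \`I\` of \`V\` is unimodular: it is
ℤ-valued, and every ℤ-linear functional on \`I\` is represented by a unique element
of \`It\`. -/
def Unimodular {V : Type*} [AddCommGroup V] [Module ℚ V]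
    (Φ : V →ₗ[ℚ] V →ₗ[ℚ] ℚ) (It I : Submodule ℤ V) : Prop :=
  (∀ x ∈ It, ∀ y ∈ I, ∃ n : ℤ, Φ x y = (n : ℚ)) ∧
  ∀ f : ↥I →ₗ[ℤ] ℤ, ∃! x : V, x ∈ It ∧ ∀ y : ↥I, Φ x (y : V) = (f y : ℚ)

/-
The sublattice `I = U ∩ L` is primitive in `L`, hence a direct summand, `L = I ⊕ C`. Nondegeneracy
of the form makes the pairing of `L*` with `L` unimodular, so the elements of `L*` orthogonal to
`C` represent each functional on `I`, extended by zero to `L`, exactly once: they form `Ĩ`.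

For primitivity, let `v` lie in `L*` and in the `ℚ`-span of `Ĩ`, and let `x ∈ Ĩ` represent the
functional `(v, ·)` on `I`. A nonzero multiple of `v - x` lies in `Ĩ` and pairs trivially with `I`,
so it vanishes, and `v = x ∈ Ĩ`.
-/

open LinearMap (BilinForm)

section Retraction

variable {R V : Type*} [CommRing R] [IsDomain R] [IsPrincipalIdealRing R] [AddCommGroup V]
  [Module R V]

theorem exists_retraction_of_isTorsionFree_quotient [Module.Finite R V] (N : Submodule R V)
    [Module.IsTorsionFree R (V ⧸ N)] : ∃ π : V →ₗ[R] N, π ∘ₗ N.subtype = LinearMap.id := by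
  have splitting := (LinearMap.exact_subtype_mkQ N).split_tfae N.injective_subtype N.mkQ_surjective
  exact (splitting.out 0 1).mp (N.mkQ.exists_rightInverse_of_surjective N.range_mkQ)

theorem exists_retraction_inf {P L : Submodule R V} (hL : L.FG) [Module.IsTorsionFree R (V ⧸ P)] :
    ∃ π : L →ₗ[R] ↥(P ⊓ L), π ∘ₗ Submodule.inclusion inf_le_right = LinearMap.id := by
  have : Module.Finite R L := Module.Finite.iff_fg.mpr hL
  have hinj : Function.Injective ((P.submoduleOf L).mapQ P L.subtype le_rfl) :=
    LinearMap.ker_eq_bot.mp <| Submodule.ker_liftQ_eq_bot _ _ _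
      (by simp [LinearMap.ker_comp, Submodule.submoduleOf])
  have : Module.IsTorsionFree R (L ⧸ P.submoduleOf L) :=
    hinj.moduleIsTorsionFree _ (map_smul _)
  obtain ⟨π, hπ⟩ := exists_retraction_of_isTorsionFree_quotient (P.submoduleOf L)
  refine ⟨(L.subtype ∘ₗ (P.submoduleOf L).subtype ∘ₗ π).codRestrict (P ⊓ L)
    fun x ↦ ⟨(π x).2, (π x : L).2⟩, ?_⟩
  ext y
  exact congr_arg (fun z : P.submoduleOf L ↦ ((z : L) : V))
    (LinearMap.congr_fun hπ ⟨⟨y, y.2.2⟩, y.2.1⟩)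

end Retraction

section Lattice

variable {R K V W : Type*} [CommRing R] [IsDomain R] [IsPrincipalIdealRing R] [Field K]
  [Algebra R K] [IsFractionRing R K] [AddCommGroup V] [Module R V] [Module K V]
  [IsScalarTower R K V] [AddCommGroup W] [Module R W] [Module K W] [IsScalarTower R K W]

theorem finiteDimensional_of_isLattice (L : Submodule R V) [L.IsLattice K] :
    FiniteDimensional K V := by
  exact ((Module.Free.chooseBasis R L).extendOfIsLattice K).finiteDimensional_of_finite

theorem exists_extend_of_isLattice (L : Submodule R V) [L.IsLattice K] (f : L →ₗ[R] W) :
    ∃ g : V →ₗ[K] W, ∀ y : L, g y = f y := by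
  let b := Module.Free.chooseBasis R L
  let g : V →ₗ[K] W := (b.extendOfIsLattice K).constr K (f ∘ b)
  have hg : g.restrictScalars R ∘ₗ L.subtype = f := b.ext fun i ↦ by
    have hgb := (b.extendOfIsLattice K).constr_basis K (f ∘ b) i
    rwa [Module.Basis.extendOfIsLattice_apply] at hgb
  exact ⟨g, LinearMap.congr_fun hg⟩

end Lattice

section Pairing

variable {V : Type*} [AddCommGroup V] [Module ℚ V] {Φ : BilinForm ℚ V} {L I M : Submodule ℤ V}

theorem coe_dualSubmodule (Φ : BilinForm ℚ V) (L : Submodule ℤ V) :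
    (Φ.dualSubmodule L : Set V) = dualL Φ L := by
  ext v
  simp [dualL, BilinForm.mem_dualSubmodule, eq_comm]

theorem unimodular_dualSubmodule [L.IsLattice ℚ] (hΦ : Φ.Nondegenerate) :
    Unimodular Φ (Φ.dualSubmodule L) L := by
  have := finiteDimensional_of_isLattice L
  refine ⟨fun x hx ↦ (coe_dualSubmodule Φ L).le hx, fun f ↦ ?_⟩
  obtain ⟨g, hg⟩ := exists_extend_of_isLattice L (Algebra.linearMap ℤ ℚ ∘ₗ f)
  have hx : ∀ y : L, Φ ((Φ.toDual hΦ).symm g) y = f y := by simpa using hg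
  refine ⟨(Φ.toDual hΦ).symm g, ⟨fun y hy ↦ ?_, hx⟩, fun x' hx' ↦ ?_⟩
  · exact Submodule.mem_one.mpr ⟨f ⟨y, hy⟩, (hx ⟨y, hy⟩).symm⟩
  · refine (Φ.toDual hΦ).injective (LinearMap.ext_on (Submodule.IsLattice.span_eq_top (M := L)) ?_)
    exact fun y hy ↦ (hx'.2 ⟨y, hy⟩).trans (hx ⟨y, hy⟩).symm

namespace Unimodular

theorem exists_le_of_retraction (h : Unimodular Φ M L) (hIL : I ≤ L) {π : L →ₗ[ℤ] I}
    (hπ : π ∘ₗ Submodule.inclusion hIL = LinearMap.id) : ∃ M' ≤ M, Unimodular Φ M' I := by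
  let M' : Submodule ℤ V := M ⊓ ⨅ y : L, ((Φ.flip (y - π y)).restrictScalars ℤ).ker
  have mem_M' {x : V} : x ∈ M' ↔ x ∈ M ∧ ∀ y : L, Φ x y = Φ x (π y) := by
    simp [M', Submodule.mem_iInf, sub_eq_zero]
  refine ⟨M', inf_le_left, fun x hx y hy ↦ h.1 x (mem_M'.mp hx).1 y (hIL hy), fun f ↦ ?_⟩
  have π_coe (y : I) : π ⟨y, hIL y.2⟩ = y := LinearMap.congr_fun hπ y
  have represents_iff (x : V) :
      (x ∈ M' ∧ ∀ y : I, Φ x y = f y) ↔ x ∈ M ∧ ∀ y : L, Φ x y = f (π y) := by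
    rw [mem_M', and_assoc]
    refine and_congr_right fun _ ↦ ⟨fun ⟨hπx, hf⟩ y ↦ (hπx y).trans (hf (π y)), fun hf ↦ ?_⟩
    have hfI (y : I) : Φ x y = f y := by simpa [π_coe] using hf ⟨y, hIL y.2⟩
    exact ⟨fun y ↦ (hf y).trans (hfI (π y)).symm, hfI⟩
  exact (existsUnique_congr represents_iff).mpr (h.2 (f ∘ₗ π))

theorem le_dualSubmodule (h : Unimodular Φ M I) : M ≤ Φ.dualSubmodule I :=
  fun x hx ↦ (coe_dualSubmodule Φ I).ge (h.1 x hx)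

theorem eq_zero_of_mem_span (h : Unimodular Φ M I) {v : V} (hv : v ∈ Submodule.span ℚ (M : Set V))
    (hvI : ∀ y ∈ I, Φ v y = 0) : v = 0 := by
  obtain ⟨n, hn⟩ := multiple_mem_span_of_mem_localization_span (nonZeroDivisors ℤ) ℚ _ v hv
  rw [Submodule.span_eq] at hn
  have hnv : n • v = 0 := (h.2 0).unique ⟨hn, fun y ↦ by simp [Submonoid.smul_def, hvI y y.2]⟩
    ⟨M.zero_mem, fun y ↦ by simp⟩
  rw [Submonoid.smul_def, ← Int.cast_smul_eq_zsmul ℚ] at hnv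
  exact (smul_eq_zero.mp hnv).resolve_left (by simp)

theorem span_inf_dualSubmodule (h : Unimodular Φ M I) :
    (Submodule.span ℚ (M : Set V)).restrictScalars ℤ ⊓ Φ.dualSubmodule I = M := by
  refine le_antisymm (fun v ⟨hv, hvI⟩ ↦ ?_) (le_inf Submodule.subset_span h.le_dualSubmodule)
  obtain ⟨x, ⟨hx, hxv⟩, -⟩ := h.2 (Φ.dualSubmoduleToDual I ⟨v, hvI⟩)
  have hvx : v - x = 0 := by
    refine h.eq_zero_of_mem_span (sub_mem hv (Submodule.subset_span hx)) fun y hy ↦ ?_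
    have hvy : (Φ.dualSubmoduleToDual I ⟨v, hvI⟩ ⟨y, hy⟩ : ℚ) = Φ v y :=
      Φ.dualSubmoduleParing_spec ⟨v, hvI⟩ ⟨y, hy⟩
    rw [map_sub, LinearMap.sub_apply, hxv ⟨y, hy⟩, hvy, sub_self]
  rwa [sub_eq_zero.mp hvx]

theorem span_inter_dualL (h : Unimodular Φ M I) (hIL : I ≤ L) (hML : (M : Set V) ⊆ dualL Φ L) :
    (Submodule.span ℚ (M : Set V) : Set V) ∩ dualL Φ L = M := by
  refine Set.Subset.antisymm (fun v ⟨hv, hvL⟩ ↦ ?_) (Set.subset_inter Submodule.subset_span hML)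
  have hvI : v ∈ Φ.dualSubmodule I := (coe_dualSubmodule Φ I).ge fun y hy ↦ hvL y (hIL hy)
  exact h.span_inf_dualSubmodule.le ⟨hv, hvI⟩

end Unimodular

end Pairing

theorem stmt11_general {V : Type*} [AddCommGroup V] [Module ℚ V] (Φ : BilinForm ℚ V)
    (hΦ : Φ.SeparatingLeft) (L : Submodule ℤ V) [L.IsLattice ℚ] (U : Submodule ℚ V) :
    (∃ M : Submodule ℤ V, (M : Set V) ⊆ dualL Φ L ∧ Unimodular Φ M (U.restrictScalars ℤ ⊓ L)) ∧
    ∀ M : Submodule ℤ V, (M : Set V) ⊆ dualL Φ L → Unimodular Φ M (U.restrictScalars ℤ ⊓ L) →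
      (Submodule.span ℚ (M : Set V) : Set V) ∩ dualL Φ L = M := by
  refine ⟨?_, fun M hML hM ↦ hM.span_inter_dualL inf_le_right hML⟩
  have := finiteDimensional_of_isLattice L
  have hL : Unimodular Φ (Φ.dualSubmodule L) L :=
    unimodular_dualSubmodule (.ofSeparatingLeft hΦ)
  have : Module.IsTorsionFree ℤ (V ⧸ U.restrictScalars ℤ) :=
    Module.IsTorsionFree.trans_faithfulSMul ℤ ℚ (V ⧸ U)
  obtain ⟨π, hπ⟩ := exists_retraction_inf (P := U.restrictScalars ℤ) (L := L) Submodule.IsLattice.fg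
  obtain ⟨M, hML, hM⟩ := hL.exists_le_of_retraction inf_le_right hπ
  exact ⟨M, (coe_dualSubmodule Φ L).subst hML, hM⟩

/-- For an even lattice `L` in `V`, an isotropic subspace `U`,
and `I = U ∩ L`, there exists a ℤ-submodule `Ĩ ⊆ L*` whose pairing with `I` is
unimodular; and any such `Ĩ` is primitive in `L*`: `(ℚ-span Ĩ) ∩ L* = Ĩ`. -/
theorem stmt11 {V : Type*} [AddCommGroup V] [Module ℚ V] [FiniteDimensional ℚ V]
    (Φ : V →ₗ[ℚ] V →ₗ[ℚ] ℚ)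
    (hsymm : ∀ v w : V, Φ v w = Φ w v)
    (hnd : ∀ v : V, (∀ w : V, Φ v w = 0) → v = 0)
    (L : Submodule ℤ V) (hfg : L.FG)
    (hLspan : Submodule.span ℚ (L : Set V) = ⊤)
    (heven : ∀ x ∈ L, ∃ n : ℤ, Φ x x = 2 * (n : ℚ))
    (U : Submodule ℚ V)
    (hUiso : ∀ u ∈ U, ∀ u' ∈ U, Φ u u' = 0) :
    (∃ It : Submodule ℤ V, (It : Set V) ⊆ dualL Φ L ∧
      Unimodular Φ It (U.restrictScalars ℤ ⊓ L)) ∧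
    (∀ It : Submodule ℤ V, (It : Set V) ⊆ dualL Φ L →
      Unimodular Φ It (U.restrictScalars ℤ ⊓ L) →
      ((Submodule.span ℚ (It : Set V) : Set V) ∩ dualL Φ L) = (It : Set V)) := by
  have : L.IsLattice ℚ := ⟨hfg, hLspan⟩
  exact stmt11_general Φ hnd L U
end

section
/- Let L be an even lattice in V, U an isotropic subspace with U = ℚ-span of I where I = U ∩ L, Ĩ ⊆ L* a ℤ-submodule pairing unimodularly with I, Ũ = ℚ-span of Ĩ, and W̃ = (U + Ũ)^⊥. Then L = I ⊕ (L ∩ Ĩ^⊥) and L ∩ U^⊥ = I ⊕ (L ∩ W̃) as internal direct sums of ℤ-modules; in particular every λ ∈ L ∩ U^⊥ is uniquely the sum of an element of I and an element of L ∩ W̃. -/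
/-!
The pairing `v ↦ (·, v)` sends `L` into the dual `Ĩ*` of `Ĩ`, and its kernel is `L ∩ Ĩ^⊥`. Since `I`
is reflexive, unimodularity identifies `I` with `Ĩ*`, so `I ⊆ L` splits this map. As `I ⊆ U^⊥`, the
modular law lets one intersect the resulting decomposition of `L` with `U^⊥`.
-/

section Complements

variable {R M N P : Type*} [Ring R] [AddCommGroup M] [Module R M] [AddCommGroup N] [Module R N]
  [AddCommGroup P] [Module R P]

theorem existsUnique_add_of_disjoint_of_mem_sup {p q : Submodule R M} (hpq : Disjoint p q) {x : M}
    (hx : x ∈ p ⊔ q) : ∃! z : M × M, z.1 ∈ p ∧ z.2 ∈ q ∧ x = z.1 + z.2 := by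
  obtain ⟨y, hy, z, hz, rfl⟩ := Submodule.mem_sup.mp hx
  refine ⟨(y, z), ⟨hy, hz, rfl⟩, ?_⟩
  rintro ⟨y', z'⟩ ⟨hy', hz', h⟩
  have hsub : y - y' = z' - z := by rw [sub_eq_sub_iff_add_eq_add, h, add_comm]
  have hzero : y - y' = 0 :=
    Submodule.disjoint_def.mp hpq _ (p.sub_mem hy hy') (hsub ▸ q.sub_mem hz' hz)
  exact Prod.ext (sub_eq_zero.mp hzero).symm (sub_eq_zero.mp (hsub ▸ hzero))

theorem isCompl_range_ker_of_bijective_comp {f : M →ₗ[R] P} {i : N →ₗ[R] M}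
    (h : Function.Bijective (f ∘ₗ i)) : IsCompl (LinearMap.range i) (LinearMap.ker f) := by
  refine ⟨Submodule.disjoint_def.mpr ?_, Submodule.codisjoint_iff_exists_add_eq.mpr fun x ↦ ?_⟩
  · rintro _ ⟨y, rfl⟩ hy
    rw [(map_eq_zero_iff (f ∘ₗ i) h.injective).mp hy, map_zero]
  · obtain ⟨y, hy⟩ := h.surjective (f x)
    refine ⟨i y, x - i y, ⟨y, rfl⟩, ?_, add_sub_cancel _ _⟩
    rw [LinearMap.mem_ker, map_sub, sub_eq_zero]
    exact hy.symm

end Complements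

theorem isReflexive_of_le_of_fg {R M : Type*} [CommRing R] [IsDomain R] [IsPrincipalIdealRing R]
    [AddCommGroup M] [Module R M] [Module.IsTorsionFree R M] {p q : Submodule R M} (hpq : p ≤ q)
    (hq : q.FG) : Module.IsReflexive R p := by
  have : Module.Finite R p := .of_fg (hq.of_le hpq)
  infer_instance

section Orthogonal

variable {R V W P : Type*} [CommSemiring R] [AddCommMonoid V] [Module R V] [AddCommMonoid W]
  [Module R W] [AddCommMonoid P] [Module R P] {B : W →ₗ[R] V →ₗ[R] P}

theorem orthogonalBilin_sup (p q : Submodule R W) :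
    (p ⊔ q).orthogonalBilin B = p.orthogonalBilin B ⊓ q.orthogonalBilin B := by
  refine le_antisymm (le_inf (Submodule.orthogonalBilin_le le_sup_left)
    (Submodule.orthogonalBilin_le le_sup_right)) fun v ⟨hp, hq⟩ x hx ↦ ?_
  obtain ⟨y, hy, z, hz, rfl⟩ := Submodule.mem_sup.mp hx
  rw [map_add, LinearMap.add_apply, hp y hy, hq z hz, add_zero]

theorem mem_orthogonalBilin_span {s : Set W} {v : V} :
    v ∈ (Submodule.span R s).orthogonalBilin B ↔ ∀ x ∈ s, B x v = 0 :=
  Submodule.span_le (p := LinearMap.ker (B.flip v))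

theorem restrictScalars_orthogonalBilin_span {S : Type*} [CommSemiring S] [Algebra S R] [Module S V]
    [Module S W] [Module S P] [IsScalarTower S R V] [IsScalarTower S R W] [IsScalarTower S R P]
    (N : Submodule S W) :
    ((Submodule.span R (N : Set W)).orthogonalBilin B).restrictScalars S =
      N.orthogonalBilin (B.restrictScalars₁₂ S S) :=
  Submodule.ext fun _ ↦ mem_orthogonalBilin_span

end Orthogonal

section IntegralPairing

variable {R K V W : Type*} [CommRing R] [Ring K] [Algebra R K] [FaithfulSMul R K]
  [AddCommGroup V] [Module R V] [AddCommGroup W] [Module R W]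

/-- The `R`-valued pairing between `N ≤ W` and `M ≤ V` induced by a `K`-valued pairing `B` all of
whose values on `N × M` lie in `R ⊆ K`. For `R = ℤ` and `K = ℚ`, it is the integral pairing between
two lattices. -/
noncomputable def integralPairing (B : W →ₗ[R] V →ₗ[R] K) (N : Submodule R W) (M : Submodule R V)
    (h : ∀ x ∈ N, ∀ y ∈ M, ∃ a : R, B x y = algebraMap R K a) : N →ₗ[R] M →ₗ[R] R :=
  LinearMap.restrictScalarsRange₂ N.subtype M.subtype (Algebra.linearMap R K)
    (FaithfulSMul.algebraMap_injective R K) B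
    fun x y ↦ (h x x.2 y y.2).imp fun _ ↦ Eq.symm

variable {B : W →ₗ[R] V →ₗ[R] K} {N : Submodule R W} {M : Submodule R V}

@[simp]
theorem algebraMap_integralPairing (h : ∀ x ∈ N, ∀ y ∈ M, ∃ a : R, B x y = algebraMap R K a)
    (x : N) (y : M) : algebraMap R K (integralPairing B N M h x y) = B x y :=
  LinearMap.restrictScalarsRange₂_apply N.subtype M.subtype (Algebra.linearMap R K) _ B _ x y

theorem integralPairing_eq_iff (h : ∀ x ∈ N, ∀ y ∈ M, ∃ a : R, B x y = algebraMap R K a) {x : N}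
    {f : M →ₗ[R] R} :
    integralPairing B N M h x = f ↔ ∀ y : M, B x y = algebraMap R K (f y) := by
  simp only [LinearMap.ext_iff, ← algebraMap_integralPairing h,
    (FaithfulSMul.algebraMap_injective R K).eq_iff]

theorem bijective_integralPairing (h : ∀ x ∈ N, ∀ y ∈ M, ∃ a : R, B x y = algebraMap R K a)
    (huni : ∀ f : M →ₗ[R] R, ∃! x : W, x ∈ N ∧ ∀ y : M, B x y = algebraMap R K (f y)) :
    Function.Bijective (integralPairing B N M h) := by
  refine (Function.bijective_iff_existsUnique _).mpr fun f ↦ ?_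
  obtain ⟨x, ⟨hx, hxf⟩, hunique⟩ := huni f
  refine ⟨⟨x, hx⟩, (integralPairing_eq_iff h).mpr hxf, fun y hy ↦ Subtype.ext ?_⟩
  exact hunique y ⟨y.2, (integralPairing_eq_iff h).mp hy⟩

theorem map_subtype_ker_flip_integralPairing
    (h : ∀ x ∈ N, ∀ y ∈ M, ∃ a : R, B x y = algebraMap R K a) :
    (LinearMap.ker (integralPairing B N M h).flip).map M.subtype = M ⊓ N.orthogonalBilin B := by
  ext v
  simp [LinearMap.ext_iff, ← (FaithfulSMul.algebraMap_injective R K).eq_iff, and_comm]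

theorem disjoint_and_sup_inf_orthogonalBilin_eq {I L : Submodule R V} [Module.IsReflexive R I]
    (hIL : I ≤ L) (hint : ∀ x ∈ N, ∀ y ∈ L, ∃ a : R, B x y = algebraMap R K a)
    (huni : ∀ f : I →ₗ[R] R, ∃! x : W, x ∈ N ∧ ∀ y : I, B x y = algebraMap R K (f y)) :
    Disjoint I (L ⊓ N.orthogonalBilin B) ∧ I ⊔ (L ⊓ N.orthogonalBilin B) = L := by
  have hintI : ∀ x ∈ N, ∀ y ∈ I, ∃ a : R, B x y = algebraMap R K a :=
    fun x hx y hy ↦ hint x hx y (hIL hy)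
  have : (integralPairing B N I hintI).IsPerfPair :=
    .of_bijective _ (bijective_integralPairing hintI huni)
  have hcomp : (integralPairing B N L hint).flip ∘ₗ Submodule.inclusion hIL =
      (integralPairing B N I hintI).flip := by
    ext y x
    apply FaithfulSMul.algebraMap_injective R K
    simp
  have hcompl : IsCompl (LinearMap.range (Submodule.inclusion hIL))
      (LinearMap.ker (integralPairing B N L hint).flip) :=
    isCompl_range_ker_of_bijective_comp (hcomp ▸ LinearMap.IsPerfPair.bijective_right _)
  have hI : (LinearMap.range (Submodule.inclusion hIL)).map L.subtype = I := by
    rw [← LinearMap.range_comp, Submodule.subtype_comp_inclusion, Submodule.range_subtype]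
  rw [← map_subtype_ker_flip_integralPairing hint]
  constructor
  · simpa only [hI] using Submodule.disjoint_map L.injective_subtype hcompl.disjoint
  · simpa only [Submodule.map_sup, Submodule.map_top, Submodule.range_subtype, hI] using
      congrArg (Submodule.map L.subtype) hcompl.sup_eq_top

end IntegralPairing

theorem stmt13_general {R K V : Type*} [CommRing R] [CommRing K] [Algebra R K] [FaithfulSMul R K]
    [AddCommGroup V] [Module R V] [Module K V] [IsScalarTower R K V] {Φ : V →ₗ[K] V →ₗ[K] K}
    {L I It : Submodule R V} [Module.IsReflexive R I] {U : Submodule K V} (hIL : I ≤ L)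
    (hIU : ∀ x ∈ I, x ∈ U.orthogonalBilin Φ)
    (hint : ∀ s ∈ It, ∀ x ∈ L, ∃ a : R, Φ s x = algebraMap R K a)
    (huni : ∀ f : I →ₗ[R] R, ∃! s : V, s ∈ It ∧ ∀ x : I, Φ s x = algebraMap R K (f x)) :
    (∀ v ∈ L, ∃! p : V × V, p.1 ∈ I ∧ (p.2 ∈ L ∧ ∀ s ∈ It, Φ s p.2 = 0) ∧ v = p.1 + p.2) ∧
    ∀ v ∈ L, v ∈ U.orthogonalBilin Φ → ∃! p : V × V, p.1 ∈ I ∧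
      (p.2 ∈ L ∧ p.2 ∈ (U ⊔ Submodule.span K (It : Set V)).orthogonalBilin Φ) ∧
        v = p.1 + p.2 := by
  let B : V →ₗ[R] V →ₗ[R] K := Φ.restrictScalars₁₂ R R
  let perpU : Submodule R V := (U.orthogonalBilin Φ).restrictScalars R
  obtain ⟨hdisj, hsup⟩ := disjoint_and_sup_inf_orthogonalBilin_eq (B := B) hIL hint huni
  refine ⟨fun v hv ↦ existsUnique_add_of_disjoint_of_mem_sup hdisj (hsup.ge hv),
    fun v hv hvU ↦ ?_⟩
  have hmodular : (I ⊔ L ⊓ It.orthogonalBilin B) ⊓ perpU = I ⊔ L ⊓ It.orthogonalBilin B ⊓ perpU :=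
    sup_inf_assoc_of_le _ hIU
  have hperp : L ⊓ It.orthogonalBilin B ⊓ perpU =
      L ⊓ ((U ⊔ Submodule.span K (It : Set V)).orthogonalBilin Φ).restrictScalars R := by
    rw [inf_assoc, inf_comm (It.orthogonalBilin B), orthogonalBilin_sup,
      Submodule.restrictScalars_inf, restrictScalars_orthogonalBilin_span]
  exact existsUnique_add_of_disjoint_of_mem_sup (hperp ▸ hdisj.mono_right inf_le_left)
    (hperp ▸ hmodular.le ⟨hsup.ge hv, hvU⟩)

/-- With `L`, `U`, `I = U ∩ L`, `Ĩ`, `Ũ = ℚ-span Ĩ`, and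
`W̃ = (U + Ũ)^⊥` as before, one has the internal direct sum decompositions
`L = I ⊕ (L ∩ Ĩ^⊥)` and `L ∩ U^⊥ = I ⊕ (L ∩ W̃)` of ℤ-modules. -/
theorem stmt13 {V : Type*} [AddCommGroup V] [Module ℚ V] [FiniteDimensional ℚ V]
    (Φ : V →ₗ[ℚ] V →ₗ[ℚ] ℚ)
    (hsymm : ∀ v w : V, Φ v w = Φ w v)
    (hnd : ∀ v : V, (∀ w : V, Φ v w = 0) → v = 0)
    (L : Submodule ℤ V) (hfg : L.FG)
    (hLspan : Submodule.span ℚ (L : Set V) = ⊤)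
    (heven : ∀ x ∈ L, ∃ n : ℤ, Φ x x = 2 * (n : ℚ))
    (U : Submodule ℚ V)
    (hUiso : ∀ u ∈ U, ∀ u' ∈ U, Φ u u' = 0)
    (I : Submodule ℤ V) (hI : I = U.restrictScalars ℤ ⊓ L)
    (hU : U = Submodule.span ℚ (I : Set V))
    (It : Submodule ℤ V) (hItdual : (It : Set V) ⊆ dualL Φ L)
    (hItuni : Unimodular Φ It I)
    (Ut : Submodule ℚ V) (hUt : Ut = Submodule.span ℚ (It : Set V))
    (Wt : Submodule ℚ V) (hWt : Wt = perp Φ (U ⊔ Ut)) :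
    -- L = I ⊕ (L ∩ Ĩ^⊥)
    (∀ lam ∈ L, ∃! p : V × V,
      p.1 ∈ I ∧ (p.2 ∈ L ∧ ∀ s ∈ It, Φ s p.2 = 0) ∧ lam = p.1 + p.2) ∧
    -- L ∩ U^⊥ = I ⊕ (L ∩ W̃)
    (∀ lam : V, lam ∈ L → lam ∈ perp Φ U →
      ∃! p : V × V,
        p.1 ∈ I ∧ (p.2 ∈ L ∧ p.2 ∈ Wt) ∧ lam = p.1 + p.2) := by
  subst hUt hWt
  have : IsAddTorsionFree V := .of_module_rat V
  have : Module.IsReflexive ℤ I := isReflexive_of_le_of_fg (hI ▸ inf_le_right) hfg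
  exact stmt13_general (hI ▸ inf_le_right) (fun x hx u hu ↦ hUiso u hu x (hI.le hx).1)
    hItdual hItuni.2
end

section
/- Let L be an even lattice in V, U an isotropic subspace with U = ℚ-span of I where I = U ∩ L, Ĩ ⊆ L* a ℤ-submodule pairing unimodularly with I, Ũ = ℚ-span of Ĩ, W̃ = (U + Ũ)^⊥, Λ̃ = L ∩ W̃, Λ̃* = {w ∈ W̃ : (w, λ) ∈ ℤ for all λ ∈ Λ̃}, and Ĩ_L = {ũ ∈ Ĩ : there exists ν ∈ L with (ũ, λ) = (ν, λ) for all λ ∈ I}. Let α : Ũ → U be the unique ℚ-linear map with (α(ũ), ṽ) = (ũ, α(ṽ)) and (ũ − α(ũ), ṽ − α(ṽ)) = 0 for all ũ, ṽ ∈ Ũ. Then there exists a ℤ-linear map ι : Ĩ_L → Λ̃*/Λ̃ such that: (a) for every ũ ∈ Ĩ_L and every w ∈ Λ̃* whose class modulo Λ̃ equals ι(ũ), one has (w, w)/2 − (ũ, ũ)/2 ∈ ℤ; and (b) for all u ∈ U, w ∈ W̃, ũ ∈ Ũ, the sum u + w + ũ lies in L if and only if ũ ∈ Ĩ_L, w ∈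 Λ̃*, the class of w modulo Λ̃ equals ι(ũ), and u + 2·α(ũ) ∈ I. -/
/-- The lattice \`Λ̃ = L ∩ W̃\`, as a subset of \`V\`. -/
def lambdaSet {V : Type*} [AddCommGroup V] [Module ℚ V]
    (L : Submodule ℤ V) (Wt : Submodule ℚ V) : Set V :=
  {x | x ∈ L ∧ x ∈ Wt}

/-- The dual lattice \`Λ̃* = {w ∈ W̃ : (w, Λ̃) ⊆ ℤ}\` of \`Λ̃ = L ∩ W̃\` inside \`W̃\`. -/
def lambdaStarSet {V : Type*} [AddCommGroup V] [Module ℚ V]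
    (Φ : V →ₗ[ℚ] V →ₗ[ℚ] ℚ) (L : Submodule ℤ V) (Wt : Submodule ℚ V) : Set V :=
  {x | x ∈ Wt ∧ ∀ y ∈ L, y ∈ Wt → ∃ n : ℤ, Φ x y = (n : ℚ)}

/-- The sublattice \`Ĩ_L = {ũ ∈ Ĩ : ∃ ν ∈ L, (ũ, ·) = (ν, ·) on I}\` of \`Ĩ\`. -/
def ItLSet {V : Type*} [AddCommGroup V] [Module ℚ V]
    (Φ : V →ₗ[ℚ] V →ₗ[ℚ] ℚ) (L I It : Submodule ℤ V) : Set V :=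
  {x | x ∈ It ∧ ∃ ν ∈ L, ∀ y ∈ I, Φ x y = Φ ν y}

/-! `ι t` is the `W̃`-component of a vector of `L` with `Ũ`-component `t`, which exists because `Φ`
puts `U` and `Ũ` in duality. It is unique modulo `Λ̃`: two such vectors differ by an element of
`L ∩ (U ⊕ W̃)`, whose `U`-component pairs integrally with `Ĩ` and hence lies in `I ⊆ L`. The same
duality identifies the `U`-component of `u + w + t ∈ L`, since `u + w + t` and `u + 2 α t` have the
same pairing with `Ũ`. Finally `t - 2 α t` has norm `-(t, t)`, so that `w - 2 α t + t ∈ L` has norm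
`(w, w) - (t, t)`. -/

open Submodule

section Biorthogonal

variable {R M N κ : Type*} [CommRing R] [AddCommGroup M] [Module R M] [AddCommGroup N] [Module R N]
  [DecidableEq κ]

/-- The families `x` and `e` are biorthogonal, i.e. Kronecker dual to each other, with respect to
the pairing `B`. This is how dual bases of `Ĩ` and `I` are expressed as families of vectors in the
ambient space. -/
def IsBiorthogonal (B : N →ₗ[R] M →ₗ[R] R) (x : κ → N) (e : κ → M) : Prop :=
  ∀ i j, B (x i) (e j) = if i = j then 1 else 0

namespace IsBiorthogonal

variable {B : N →ₗ[R] M →ₗ[R] R} {x : κ → N} {e : κ → M}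

theorem flip (h : IsBiorthogonal B x e) : IsBiorthogonal B.flip e x := fun i j => by
  simp only [LinearMap.flip_apply, h j i, eq_comm]

theorem sum_smul_eq_of_mem_span [Fintype κ] (h : IsBiorthogonal B x e) {u : M}
    (hu : u ∈ span R (Set.range e)) : ∑ j, B (x j) u • e j = u := by
  obtain ⟨c, rfl⟩ := (mem_span_range_iff_exists_fun R).mp hu
  simp [h _ _]

theorem mem_span_int [Finite κ] (h : IsBiorthogonal B x e) {u : M}
    (hu : u ∈ span R (Set.range e)) (hint : ∀ j, ∃ n : ℤ, B (x j) u = n) :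
    u ∈ span ℤ (Set.range e) := by
  cases nonempty_fintype κ
  choose n hn using hint
  rw [mem_span_range_iff_exists_fun]
  exact ⟨n, by simpa only [hn, Int.cast_smul_eq_zsmul] using h.sum_smul_eq_of_mem_span hu⟩

theorem exists_mem_span_forall_apply_eq [Finite κ] (h : IsBiorthogonal B x e) (f : N →ₗ[R] R) :
    ∃ u ∈ span R (Set.range e), ∀ t ∈ span R (Set.range x), B t u = f t := by
  cases nonempty_fintype κ
  refine ⟨∑ j, f (x j) • e j, ?_, fun t ht => ?_⟩
  · exact sum_smul_mem _ _ fun j _ => subset_span ⟨j, rfl⟩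
  · calc B t (∑ j, f (x j) • e j) = f (∑ j, B t (e j) • x j) := by simp [mul_comm]
      _ = f t := congrArg f (h.flip.sum_smul_eq_of_mem_span ht)

end IsBiorthogonal

end Biorthogonal

theorem apply_neg_add_self_eq_sub {R M : Type*} [CommRing R] [AddCommGroup M] [Module R M]
    {B : M →ₗ[R] M →ₗ[R] R} (hsymm : ∀ v w, B v w = B w v) {u w t : M} (huu : B u u = 0)
    (huw : B u w = 0) (htw : B t w = 0) (htu : B t u = B t t) :
    B (-u + (w + t)) (-u + (w + t)) = B w w - B t t := by
  simp only [map_add, map_neg, LinearMap.add_apply, LinearMap.neg_apply, hsymm u t, hsymm w u,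
    hsymm w t, huu, huw, htw, htu]
  ring

theorem apply_two_smul_eq_of_apply_sub_eq_zero {R M : Type*} [CommRing R] [AddCommGroup M]
    [Module R M] {B : M →ₗ[R] M →ₗ[R] R} (hsymm : ∀ v w, B v w = B w v) {s s' t t' : M}
    (hadj : B s' t = B s t') (hiso : B s' t' = 0) (hsub : B (s - s') (t - t') = 0) :
    B t ((2 : R) • s') = B t s := by
  simp only [map_sub, LinearMap.sub_apply, hiso, ← hadj] at hsub
  rw [map_smul, smul_eq_mul, hsymm t s', hsymm t s]
  linear_combination -hsub

section Lattice

variable {V : Type*} [AddCommGroup V] [Module ℚ V] {Φ : V →ₗ[ℚ] V →ₗ[ℚ] ℚ}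
  {L I It : Submodule ℤ V}

theorem mem_perp_sup_iff {U U' : Submodule ℚ V} {v : V} :
    v ∈ perp Φ (U ⊔ U') ↔ v ∈ perp Φ U ∧ v ∈ perp Φ U' := by
  refine ⟨fun hv => ⟨fun u hu => hv u (mem_sup_left hu),
    fun u hu => hv u (mem_sup_right hu)⟩, fun hv z hz => ?_⟩
  obtain ⟨u, hu, u', hu', rfl⟩ := mem_sup.mp hz
  rw [map_add, LinearMap.add_apply, hv.1 u hu, hv.2 u' hu', add_zero]

theorem mem_perp_span_iff {S : Set V} {v : V} :
    v ∈ perp Φ (span ℚ S) ↔ ∀ y ∈ S, Φ y v = 0 :=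
  span_le (p := LinearMap.ker (Φ.flip v))

theorem exists_int_half_sub_half_of_even (hsymm : ∀ v w, Φ v w = Φ w v)
    (heven : ∀ x ∈ L, ∃ n : ℤ, Φ x x = 2 * (n : ℚ)) {u w t : V} (huu : Φ u u = 0)
    (huw : Φ u w = 0) (htw : Φ t w = 0) (htu : Φ t u = Φ t t) (hmem : -u + w + t ∈ L) :
    ∃ n : ℤ, Φ w w / 2 - Φ t t / 2 = n := by
  obtain ⟨n, hn⟩ := heven _ hmem
  rw [add_assoc, apply_neg_add_self_eq_sub hsymm huu huw htw htu] at hn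
  exact ⟨n, by linarith⟩

theorem subset_dualL_of_even (hsymm : ∀ v w, Φ v w = Φ w v)
    (heven : ∀ x ∈ L, ∃ n : ℤ, Φ x x = 2 * (n : ℚ)) : (L : Set V) ⊆ dualL Φ L := by
  intro a ha b hb
  obtain ⟨p, hp⟩ := heven a ha
  obtain ⟨q, hq⟩ := heven b hb
  obtain ⟨r, hr⟩ := heven (a + b) (L.add_mem ha hb)
  refine ⟨r - p - q, ?_⟩
  simp only [map_add, LinearMap.add_apply, hsymm b a] at hr
  push_cast
  linarith

namespace Unimodular

theorem eq_of_forall_apply_eq (h : Unimodular Φ It I) {s t : V} (hs : s ∈ It) (ht : t ∈ It)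
    (hst : ∀ y ∈ I, Φ s y = Φ t y) : s = t :=
  sub_eq_zero.mp <| (h.2 0).unique
    ⟨It.sub_mem hs ht, fun y => by simp [hst y y.2]⟩ ⟨It.zero_mem, fun y => by simp⟩

theorem exists_isBiorthogonal (h : Unimodular Φ It I) (hI : I.FG) :
    ∃ (n : ℕ) (x e : Fin n → V), IsBiorthogonal Φ x e ∧
      span ℤ (Set.range x) = It ∧ span ℤ (Set.range e) = I := by
  have : Module.Finite ℤ I := Module.Finite.iff_fg.mpr hI
  have : IsAddTorsionFree V := IsAddTorsionFree.of_module_rat V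
  let b := Module.finBasis ℤ I
  have hspan : span ℤ (Set.range fun j => (b j : V)) = I := by
    have := congrArg (map I.subtype) b.span_eq
    rwa [map_span, map_subtype_top, ← Set.range_comp] at this
  choose x hx _ using fun j => h.2 (b.coord j)
  have hbi : IsBiorthogonal Φ x fun j => (b j : V) := fun i j => by
    simp [(hx i).2, Finsupp.single_apply, eq_comm]
  refine ⟨_, x, _, hbi, le_antisymm (span_le.mpr ?_) fun t ht => ?_, hspan⟩
  · rintro _ ⟨j, rfl⟩
    exact (hx j).1
  · choose n hn using fun j => h.1 t ht (b j) (b j).2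
    have hsum : ∑ j, n j • x j ∈ It := It.sum_mem fun j _ => It.smul_mem _ (hx j).1
    rw [mem_span_range_iff_exists_fun]
    refine ⟨n, h.eq_of_forall_apply_eq hsum ht fun y hy => ?_⟩
    have hy' : y ∈ span ℤ (Set.range fun j => (b j : V)) := hspan.symm ▸ hy
    obtain ⟨c, rfl⟩ := (mem_span_range_iff_exists_fun ℤ).mp hy'
    simp [hbi _ _, hn, mul_comm]

theorem mem_right_of_mem_span (h : Unimodular Φ It I) (hI : I.FG) {u : V}
    (hu : u ∈ span ℚ (I : Set V)) (hint : ∀ y ∈ It, ∃ n : ℤ, Φ y u = n) : u ∈ I := by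
  obtain ⟨n, x, e, hbi, rfl, rfl⟩ := h.exists_isBiorthogonal hI
  rw [span_span_of_tower] at hu
  exact hbi.mem_span_int hu fun j => hint _ (subset_span ⟨j, rfl⟩)

theorem mem_left_of_mem_span (h : Unimodular Φ It I) (hI : I.FG) {t : V}
    (ht : t ∈ span ℚ (It : Set V)) (hint : ∀ y ∈ I, ∃ n : ℤ, Φ t y = n) : t ∈ It := by
  obtain ⟨n, x, e, hbi, rfl, rfl⟩ := h.exists_isBiorthogonal hI
  rw [span_span_of_tower] at ht
  exact hbi.flip.mem_span_int ht fun j => hint _ (subset_span ⟨j, rfl⟩)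

theorem exists_mem_span_sub_mem_perp (h : Unimodular Φ It I) (hI : I.FG) (v : V) :
    ∃ u ∈ span ℚ (I : Set V), v - u ∈ perp Φ (span ℚ (It : Set V)) := by
  obtain ⟨n, x, e, hbi, rfl, rfl⟩ := h.exists_isBiorthogonal hI
  simp only [span_span_of_tower]
  obtain ⟨u, hu, hv⟩ := hbi.exists_mem_span_forall_apply_eq (Φ.flip v)
  exact ⟨u, hu, fun t ht => by rw [map_sub, hv t ht, LinearMap.flip_apply, sub_self]⟩

theorem add_mem_of_add_mem (h : Unimodular Φ It I) (hI : I.FG) (hdual : (It : Set V) ⊆ dualL Φ L)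
    {u u' v : V} (hu : u ∈ span ℚ (I : Set V)) (hu' : u' ∈ span ℚ (I : Set V))
    (hv : ∀ y ∈ It, Φ y u' = Φ y v) (huv : u + v ∈ L) : u + u' ∈ I := by
  refine h.mem_right_of_mem_span hI (add_mem hu hu') fun y hy => ?_
  rw [map_add, hv y hy, ← map_add]
  exact hdual hy _ huv

theorem add_mem_lattice_iff (h : Unimodular Φ It I) (hI : I.FG) (hIL : I ≤ L)
    (hdual : (It : Set V) ⊆ dualL Φ L) {u u' v : V} (hu : u ∈ span ℚ (I : Set V))
    (hu' : u' ∈ span ℚ (I : Set V)) (hv : ∀ y ∈ It, Φ y u' = Φ y v) :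
    u + v ∈ L ↔ v ∈ L ⊔ (span ℚ (I : Set V)).restrictScalars ℤ ∧ u + u' ∈ I := by
  constructor
  · intro huv
    refine ⟨?_, h.add_mem_of_add_mem hI hdual hu hu' hv huv⟩
    exact mem_sup.mpr ⟨u + v, huv, -u, neg_mem hu, by abel⟩
  · rintro ⟨hvL, huI⟩
    obtain ⟨l, hl, a, ha, rfl⟩ := mem_sup.mp hvL
    have haI : -a + u' ∈ I :=
      h.add_mem_of_add_mem hI hdual (neg_mem ha) hu' hv (by simpa [add_comm] using hl)
    have hsplit : u + (l + a) = l + ((u + u') - (-a + u')) := by abel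
    rw [hsplit]
    exact L.add_mem hl (hIL (I.sub_mem huI haI))

theorem mem_lattice_of_mem_perp (h : Unimodular Φ It I) (hI : I.FG) (hIL : I ≤ L)
    (hdual : (It : Set V) ⊆ dualL Φ L) {w : V} (hw : w ∈ perp Φ (span ℚ (It : Set V)))
    (hwL : w ∈ L ⊔ (span ℚ (I : Set V)).restrictScalars ℤ) : w ∈ L := by
  have hw0 : ∀ y ∈ It, Φ y 0 = Φ y w := fun y hy => by
    rw [map_zero, hw y (subset_span hy)]
  simpa using (h.add_mem_lattice_iff hI hIL hdual (zero_mem _) (zero_mem _) hw0).mpr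
    ⟨hwL, by simp⟩

end Unimodular

theorem add_mem_ItLSet {s t : V} (hs : s ∈ ItLSet Φ L I It) (ht : t ∈ ItLSet Φ L I It) :
    s + t ∈ ItLSet Φ L I It := by
  obtain ⟨hsIt, μ, hμ, hsμ⟩ := hs
  obtain ⟨htIt, ν, hν, htν⟩ := ht
  exact ⟨It.add_mem hsIt htIt, μ + ν, L.add_mem hμ hν, fun y hy => by
    simp only [map_add, LinearMap.add_apply, hsμ y hy, htν y hy]⟩

theorem mem_lambdaStarSet_of_add_mem (hL : (L : Set V) ⊆ dualL Φ L) {U : Submodule ℚ V} {v w : V}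
    (hv : v ∈ U) (hw : w ∈ perp Φ U) (hvw : v + w ∈ L) : w ∈ lambdaStarSet Φ L (perp Φ U) := by
  refine ⟨hw, fun y hyL hyU => ?_⟩
  obtain ⟨n, hn⟩ := hL hvw y hyL
  exact ⟨n, by rw [← hn, map_add, LinearMap.add_apply, hyU v hv, zero_add]⟩

theorem Unimodular.mem_ItLSet_of_add_mem (h : Unimodular Φ It I) (hI : I.FG) (hIL : I ≤ L)
    (hsymm : ∀ v w, Φ v w = Φ w v) (hL : (L : Set V) ⊆ dualL Φ L) {v t : V}
    (hv : v ∈ perp Φ (span ℚ (I : Set V))) (ht : t ∈ span ℚ (It : Set V))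
    (hvt : v + t ∈ L) : t ∈ ItLSet Φ L I It := by
  have heq : ∀ y ∈ I, Φ t y = Φ (v + t) y := fun y hy => by
    rw [map_add, LinearMap.add_apply, hsymm v y, hv y (subset_span hy), zero_add]
  refine ⟨h.mem_left_of_mem_span hI ht fun y hy => ?_, v + t, hvt, heq⟩
  rw [heq y hy]
  exact hL hvt y (hIL hy)

/-- The space `W̃ = (U + Ũ)^⊥`, where `U` and `Ũ` are the rational spans of `I` and `It`. -/
abbrev perpSpan (Φ : V →ₗ[ℚ] V →ₗ[ℚ] ℚ) (I It : Submodule ℤ V) : Submodule ℚ V :=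
  perp Φ (span ℚ (I : Set V) ⊔ span ℚ (It : Set V))

/-- The map `ι` represents the gluing homomorphism `Ĩ_L → Λ̃*/Λ̃`: `ι t` is the `W̃`-component of a
vector of `L` with `Ũ`-component `t`. As the `U`-component is determined only up to `I`, it is
absorbed into `L + U`. The values of `ι` outside `Ĩ_L` are irrelevant. -/
def IsGlueMap (Φ : V →ₗ[ℚ] V →ₗ[ℚ] ℚ) (L I It : Submodule ℤ V) (ι : V → V) : Prop :=
  ∀ t ∈ ItLSet Φ L I It,
    ι t ∈ perpSpan Φ I It ∧ ι t + t ∈ L ⊔ (span ℚ (I : Set V)).restrictScalars ℤ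

theorem Unimodular.exists_isGlueMap (h : Unimodular Φ It I) (hI : I.FG)
    (hsymm : ∀ v w, Φ v w = Φ w v) (hiso : span ℚ (I : Set V) ≤ perp Φ (span ℚ (I : Set V))) :
    ∃ ι, IsGlueMap Φ L I It ι := by
  have hlift : ∀ t ∈ ItLSet Φ L I It,
      ∃ w ∈ perpSpan Φ I It, w + t ∈ L ⊔ (span ℚ (I : Set V)).restrictScalars ℤ := by
    rintro t ⟨-, ν, hν, htν⟩
    have hνt : ν - t ∈ perp Φ (span ℚ (I : Set V)) := mem_perp_span_iff.mpr fun y hy => by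
      rw [map_sub, hsymm y ν, hsymm y t, htν y hy, sub_self]
    obtain ⟨u, hu, hperp⟩ := h.exists_mem_span_sub_mem_perp hI (ν - t)
    exact ⟨ν - t - u, mem_perp_sup_iff.mpr ⟨sub_mem hνt (hiso hu), hperp⟩,
      mem_sup.mpr ⟨ν, hν, -u, neg_mem hu, by abel⟩⟩
  choose! ι hιW hιL using hlift
  exact ⟨ι, fun t ht => ⟨hιW t ht, hιL t ht⟩⟩

namespace IsGlueMap

variable {ι : V → V}

theorem map_add_sub_sub_mem (hι : IsGlueMap Φ L I It ι) (h : Unimodular Φ It I) (hI : I.FG)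
    (hIL : I ≤ L) (hdual : (It : Set V) ⊆ dualL Φ L) {s t : V}
    (hs : s ∈ ItLSet Φ L I It) (ht : t ∈ ItLSet Φ L I It) :
    ι (s + t) - ι s - ι t ∈ lambdaSet L (perpSpan Φ I It) := by
  obtain ⟨hsW, hsL⟩ := hι s hs
  obtain ⟨htW, htL⟩ := hι t ht
  obtain ⟨hstW, hstL⟩ := hι (s + t) (add_mem_ItLSet hs ht)
  have hmem : ι (s + t) - ι s - ι t ∈ perpSpan Φ I It := sub_mem (sub_mem hstW hsW) htW
  refine ⟨h.mem_lattice_of_mem_perp hI hIL hdual (mem_perp_sup_iff.mp hmem).2 ?_, hmem⟩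
  convert sub_mem (sub_mem hstL hsL) htL using 1
  abel

theorem add_mem_sup_iff (hι : IsGlueMap Φ L I It ι) (h : Unimodular Φ It I) (hI : I.FG)
    (hIL : I ≤ L) (hdual : (It : Set V) ⊆ dualL Φ L) (hsymm : ∀ v w, Φ v w = Φ w v)
    (hL : (L : Set V) ⊆ dualL Φ L) (hiso : span ℚ (I : Set V) ≤ perp Φ (span ℚ (I : Set V)))
    {w t : V} (hw : w ∈ perpSpan Φ I It) (ht : t ∈ span ℚ (It : Set V)) :
    w + t ∈ L ⊔ (span ℚ (I : Set V)).restrictScalars ℤ ↔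
      t ∈ ItLSet Φ L I It ∧ w ∈ lambdaStarSet Φ L (perpSpan Φ I It) ∧
      w - ι t ∈ lambdaSet L (perpSpan Φ I It) := by
  constructor
  · intro hwt
    obtain ⟨l, hl, u, hu, hlu⟩ := mem_sup.mp hwt
    have hl_eq : l = -u + w + t := by rw [add_assoc, ← hlu]; abel
    have htL : t ∈ ItLSet Φ L I It := h.mem_ItLSet_of_add_mem hI hIL hsymm hL
      (add_mem (hiso (neg_mem hu)) (mem_perp_sup_iff.mp hw).1) ht (hl_eq ▸ hl)
    have hwL : -u + t + w ∈ L := by rwa [add_right_comm, ← hl_eq]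
    have hsub : w - ι t ∈ perpSpan Φ I It := sub_mem hw (hι t htL).1
    refine ⟨htL, mem_lambdaStarSet_of_add_mem hL
      (add_mem (mem_sup_left (neg_mem hu)) (mem_sup_right ht)) hw hwL, ?_, hsub⟩
    refine h.mem_lattice_of_mem_perp hI hIL hdual (mem_perp_sup_iff.mp hsub).2 ?_
    simpa only [add_sub_add_right_eq_sub] using sub_mem hwt (hι t htL).2
  · rintro ⟨htL, -, hsub, -⟩
    have hsplit : w + t = (w - ι t) + (ι t + t) := by abel
    rw [hsplit]
    exact add_mem (mem_sup_left hsub) (hι t htL).2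

theorem map_mem_lambdaStarSet (hι : IsGlueMap Φ L I It ι) (h : Unimodular Φ It I) (hI : I.FG)
    (hIL : I ≤ L) (hdual : (It : Set V) ⊆ dualL Φ L) (hsymm : ∀ v w, Φ v w = Φ w v)
    (hL : (L : Set V) ⊆ dualL Φ L) (hiso : span ℚ (I : Set V) ≤ perp Φ (span ℚ (I : Set V)))
    {t : V} (ht : t ∈ ItLSet Φ L I It) : ι t ∈ lambdaStarSet Φ L (perpSpan Φ I It) := by
  obtain ⟨hιW, hιL⟩ := hι t ht
  exact ((hι.add_mem_sup_iff h hI hIL hdual hsymm hL hiso hιW (subset_span ht.1)).mp hιL).2.1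

theorem add_add_mem_iff (hι : IsGlueMap Φ L I It ι) (h : Unimodular Φ It I) (hI : I.FG)
    (hIL : I ≤ L) (hdual : (It : Set V) ⊆ dualL Φ L) (hsymm : ∀ v w, Φ v w = Φ w v)
    (hL : (L : Set V) ⊆ dualL Φ L) (hiso : span ℚ (I : Set V) ≤ perp Φ (span ℚ (I : Set V)))
    {u u' w t : V} (hu : u ∈ span ℚ (I : Set V)) (hw : w ∈ perpSpan Φ I It)
    (ht : t ∈ span ℚ (It : Set V)) (hu' : u' ∈ span ℚ (I : Set V))
    (htu' : ∀ y ∈ It, Φ y u' = Φ y t) :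
    u + w + t ∈ L ↔
      t ∈ ItLSet Φ L I It ∧ w ∈ lambdaStarSet Φ L (perpSpan Φ I It) ∧
      w - ι t ∈ lambdaSet L (perpSpan Φ I It) ∧ u + u' ∈ I := by
  have hpair : ∀ y ∈ It, Φ y u' = Φ y (w + t) := fun y hy => by
    rw [htu' y hy, map_add, hw y (mem_sup_right (subset_span hy)), zero_add]
  rw [add_assoc, h.add_mem_lattice_iff hI hIL hdual hu hu' hpair,
    hι.add_mem_sup_iff h hI hIL hdual hsymm hL hiso hw ht, and_assoc, and_assoc]

end IsGlueMap

end Lattice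

theorem stmt14_general {V : Type*} [AddCommGroup V] [Module ℚ V]
    (Φ : V →ₗ[ℚ] V →ₗ[ℚ] ℚ)
    (hsymm : ∀ v w : V, Φ v w = Φ w v)
    (L : Submodule ℤ V)
    (heven : ∀ x ∈ L, ∃ n : ℤ, Φ x x = 2 * (n : ℚ))
    (U : Submodule ℚ V)
    (hUiso : ∀ u ∈ U, ∀ u' ∈ U, Φ u u' = 0)
    (I : Submodule ℤ V) (hI : I = U.restrictScalars ℤ ⊓ L) (hIfg : I.FG)
    (hU : U = span ℚ (I : Set V))
    (It : Submodule ℤ V) (hItdual : (It : Set V) ⊆ dualL Φ L)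
    (hItuni : Unimodular Φ It I)
    (Ut : Submodule ℚ V) (hUt : Ut = span ℚ (It : Set V))
    (Wt : Submodule ℚ V) (hWt : Wt = perp Φ (U ⊔ Ut))
    (α : V →ₗ[ℚ] V) (hαU : ∀ x ∈ Ut, α x ∈ U)
    (hαsym : ∀ x ∈ Ut, ∀ y ∈ Ut, Φ (α x) y = Φ x (α y))
    (hαiso : ∀ x ∈ Ut, ∀ y ∈ Ut, Φ (x - α x) (y - α y) = 0) :
    ∃ ι : V → V,
      (∀ x ∈ ItLSet Φ L I It, ι x ∈ lambdaStarSet Φ L Wt) ∧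
      (∀ x ∈ ItLSet Φ L I It, ∀ y ∈ ItLSet Φ L I It,
        ι (x + y) - ι x - ι y ∈ lambdaSet L Wt) ∧
      (∀ x ∈ ItLSet Φ L I It, ∀ w ∈ lambdaStarSet Φ L Wt,
        w - ι x ∈ lambdaSet L Wt → ∃ n : ℤ, Φ w w / 2 - Φ x x / 2 = (n : ℚ)) ∧
      (∀ u ∈ U, ∀ w ∈ Wt, ∀ t ∈ Ut,
        (u + w + t ∈ L ↔
          t ∈ ItLSet Φ L I It ∧ w ∈ lambdaStarSet Φ L Wt ∧
          w - ι t ∈ lambdaSet L Wt ∧ u + (2 : ℚ) • α t ∈ I)) := by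
  have hIL : I ≤ L := hI.trans_le inf_le_right
  subst hU hUt hWt
  have hL : (L : Set V) ⊆ dualL Φ L := subset_dualL_of_even hsymm heven
  have hiso : span ℚ (I : Set V) ≤ perp Φ (span ℚ (I : Set V)) :=
    fun u hu u' hu' => hUiso u' hu' u hu
  have hα : ∀ s ∈ span ℚ (It : Set V), ∀ t ∈ span ℚ (It : Set V),
      Φ t ((2 : ℚ) • α s) = Φ t s := fun s hs t ht =>
    apply_two_smul_eq_of_apply_sub_eq_zero hsymm (hαsym s hs t ht)
      (hUiso _ (hαU s hs) _ (hαU t ht)) (hαiso s hs t ht)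
  obtain ⟨ι, hι⟩ := hItuni.exists_isGlueMap (L := L) hIfg hsymm hiso
  have hmem := fun u hu w hw t ht => hι.add_add_mem_iff hItuni hIfg hIL hItdual hsymm hL hiso
    (u := u) (w := w) hu hw ht (smul_mem _ 2 (hαU t ht)) fun y hy => hα t ht y (subset_span hy)
  refine ⟨ι, fun x hx => ?_, fun x hx y hy => ?_, fun x hx w hw hwx => ?_, hmem⟩
  · exact hι.map_mem_lambdaStarSet hItuni hIfg hIL hItdual hsymm hL hiso hx
  · exact hι.map_add_sub_sub_mem hItuni hIfg hIL hItdual hx hy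
  · have hxt : x ∈ span ℚ (It : Set V) := subset_span hx.1
    have hu : (2 : ℚ) • α x ∈ span ℚ (I : Set V) := smul_mem _ _ (hαU x hxt)
    have hxL : -((2 : ℚ) • α x) + w + x ∈ L :=
      (hmem _ (neg_mem hu) w hw.1 x hxt).mpr ⟨hx, hw, hwx, by simp⟩
    exact exists_int_half_sub_half_of_even hsymm heven (hUiso _ hu _ hu)
      (hw.1 _ (mem_sup_left hu)) (hw.1 _ (mem_sup_right hxt)) (hα x hxt x hxt) hxL

/-- **Theorem: decomposition of `L`.** With `L`, `U`, `I`, `Ĩ`,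
`Ũ`, `W̃`, `Λ̃`, `Λ̃*`, `Ĩ_L` and the correction map `α` as in the context, there
is a ℤ-linear map `ι : Ĩ_L → Λ̃*/Λ̃` (encoded here as a function `ι : V → V` that
maps `Ĩ_L` into `Λ̃*` and is additive modulo `Λ̃`) such that representatives of
`ι(ũ)` have the same norm as `ũ` in `ℚ/ℤ`, and such that `u + w + ũ ∈ L` iff
`ũ ∈ Ĩ_L`, `w ∈ Λ̃*` with `w ≡ ι(ũ) mod Λ̃`, and `u ∈ −2α(ũ) + I`. -/
theorem stmt14 {V : Type*} [AddCommGroup V] [Module ℚ V] [FiniteDimensional ℚ V]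
    (Φ : V →ₗ[ℚ] V →ₗ[ℚ] ℚ)
    (hsymm : ∀ v w : V, Φ v w = Φ w v)
    (hnd : ∀ v : V, (∀ w : V, Φ v w = 0) → v = 0)
    (L : Submodule ℤ V) (hfg : L.FG)
    (hLspan : Submodule.span ℚ (L : Set V) = ⊤)
    (heven : ∀ x ∈ L, ∃ n : ℤ, Φ x x = 2 * (n : ℚ))
    (U : Submodule ℚ V)
    (hUiso : ∀ u ∈ U, ∀ u' ∈ U, Φ u u' = 0)
    (I : Submodule ℤ V) (hI : I = U.restrictScalars ℤ ⊓ L)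
    (hU : U = Submodule.span ℚ (I : Set V))
    (It : Submodule ℤ V) (hItdual : (It : Set V) ⊆ dualL Φ L)
    (hItuni : Unimodular Φ It I)
    (Ut : Submodule ℚ V) (hUt : Ut = Submodule.span ℚ (It : Set V))
    (Wt : Submodule ℚ V) (hWt : Wt = perp Φ (U ⊔ Ut))
    (α : V →ₗ[ℚ] V) (hαU : ∀ x ∈ Ut, α x ∈ U)
    (hαsym : ∀ x ∈ Ut, ∀ y ∈ Ut, Φ (α x) y = Φ x (α y))
    (hαiso : ∀ x ∈ Ut, ∀ y ∈ Ut, Φ (x - α x) (y - α y) = 0) :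
    ∃ ι : V → V,
      -- ι maps Ĩ_L into Λ̃*
      (∀ x ∈ ItLSet Φ L I It, ι x ∈ lambdaStarSet Φ L Wt) ∧
      -- ι is additive modulo Λ̃ (i.e. descends to a ℤ-linear map Ĩ_L → Λ̃*/Λ̃)
      (∀ x ∈ ItLSet Φ L I It, ∀ y ∈ ItLSet Φ L I It,
        ι (x + y) - ι x - ι y ∈ lambdaSet L Wt) ∧
      -- (a) norm condition: (ι ũ)²/2 = ũ²/2 in ℚ/ℤ
      (∀ x ∈ ItLSet Φ L I It, ∀ w ∈ lambdaStarSet Φ L Wt,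
        w - ι x ∈ lambdaSet L Wt → ∃ n : ℤ, Φ w w / 2 - Φ x x / 2 = (n : ℚ)) ∧
      -- (b) characterization of membership in L
      (∀ u ∈ U, ∀ w ∈ Wt, ∀ t ∈ Ut,
        (u + w + t ∈ L ↔
          t ∈ ItLSet Φ L I It ∧ w ∈ lambdaStarSet Φ L Wt ∧
          w - ι t ∈ lambdaSet L Wt ∧ u + (2 : ℚ) • α t ∈ I)) := by
  exact stmt14_general Φ hsymm L heven U hUiso I hI (hfg.of_le (hI.trans_le inf_le_right)) hU
    It hItdual hItuni Ut hUt Wt hWt α hαU hαsym hαiso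
end

section
/- Let L be an even lattice in V, U an isotropic subspace with U = ℚ-span of I where I = U ∩ L, Ĩ ⊆ L* a ℤ-submodule pairing unimodularly with I, Ũ = ℚ-span of Ĩ, W̃ = (U + Ũ)^⊥, Λ̃ = L ∩ W̃, Λ̃* = {w ∈ W̃ : (w, λ) ∈ ℤ for all λ ∈ Λ̃}, Ĩ_L = {ũ ∈ Ĩ : there exists ν ∈ L with (ũ, λ) = (ν, λ) for all λ ∈ I}, I_{L*} = U ∩ L*, and I^⊥_{L*} = U^⊥ ∩ L*. Then there exists a ℤ-linear map ι̂ : Λ̃*/Λ̃ → U/I_{L*} such that for all u ∈ U, w ∈ W̃, ũ ∈ Ũ: the sum u + w + ũ lies in L* if and only if w ∈ Λ̃*, ũ ∈ Ĩ, and the class of u modulo I_{L*} equals −ι̂(class of w modulo Λ̃); and u + w + ũ lies in L + I^⊥_{L*} if and only if w ∈ Λ̃*, ũ ∈ Ĩ_L, and the class of u modulo I_{L*} equals −ι̂(class of w modulo Λ̃). -/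
/-- The lattice `I_{L*} = U ∩ L*`, as a subset of `V`. -/
def ILstarSet {V : Type*} [AddCommGroup V] [Module ℚ V]
    (Φ : V →ₗ[ℚ] V →ₗ[ℚ] ℚ) (L : Submodule ℤ V) (U : Submodule ℚ V) : Set V :=
  {x | x ∈ U ∧ x ∈ dualL Φ L}

/-!
Since `V ⧸ U^⊥` is torsion-free, `L ∩ U^⊥` is a direct summand of `L`, and the projection of `L`
onto it extends to a projection `P` of `V` onto `U^⊥`. Its adjoint `P*` satisfies
`(P* w, x) = (w, P x)`, so `P*` sends every `w` that is integral on `L ∩ U^⊥` into `L*`, while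
`w - P* w` lies in `U^⊥⊥ = U`: thus `ι̂ w = w - P* w`. Unimodularity provides dual bases of `I` and
`Ĩ`, which give `L ∩ U^⊥ = I ⊕ Λ̃` and `Ũ ∩ I* = Ĩ`. By the former, every `w ∈ Λ̃*` is integral on
`L ∩ U^⊥`, so that `w - ι̂ w ∈ L*`; by the latter, the `Ũ`-component of an element of `L*` lies in
`Ĩ`.
-/

open Module Submodule
open LinearMap (BilinForm IsProj ker range)
open LinearMap.BilinForm (dualSubmodule orthogonal)

section Lattice

theorem exists_isProj_ker_of_projective_range {R M E : Type*} [Ring R] [AddCommGroup M]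
    [Module R M] [AddCommGroup E] [Module R E] (q : M →ₗ[R] E) [Projective R (range q)] :
    ∃ r : M →ₗ[R] M, IsProj (ker q) r := by
  obtain ⟨s, hs⟩ := q.rangeRestrict.exists_rightInverse_of_surjective q.range_rangeRestrict
  have hqs (x : M) : q (s (q.rangeRestrict x)) = q x :=
    congrArg Subtype.val (LinearMap.congr_fun hs (q.rangeRestrict x))
  refine ⟨LinearMap.id - s ∘ₗ q.rangeRestrict, fun x => ?_, fun x hx => ?_⟩
  · simp [hqs]
  · have hx' : q.rangeRestrict x = 0 := Subtype.ext hx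
    simp [hx']

variable {R K V : Type*} [CommRing R] [Field K] [Algebra R K] [IsFractionRing R K]
  [AddCommGroup V] [Module R V] [Module K V] [IsScalarTower R K V]

theorem exists_smul_mem_of_mem_span [IsDomain R] (L : Submodule R V) {v : V}
    (hv : v ∈ span K (L : Set V)) : ∃ a : R, a ≠ 0 ∧ a • v ∈ L := by
  rw [IsLocalization.mem_span_iff (nonZeroDivisors R), span_eq] at hv
  obtain ⟨y, hy, z, rfl⟩ := hv
  refine ⟨z, nonZeroDivisors.coe_ne_zero z, ?_⟩
  rwa [← algebraMap_smul K (z : R), smul_smul, IsLocalization.mk'_spec', map_one, one_smul]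

theorem span_restrictScalars_inf [IsDomain R] (L : Submodule R V) [IsLattice K L]
    (W : Submodule K V) :
    span K ((W.restrictScalars R ⊓ L : Submodule R V) : Set V) = W := by
  refine le_antisymm (span_le.mpr fun x hx => hx.1) fun w hw => ?_
  obtain ⟨a, ha, haw⟩ : ∃ a : R, a ≠ 0 ∧ a • w ∈ L :=
    exists_smul_mem_of_mem_span L (by rw [IsLattice.span_eq_top]; trivial)
  have ha' : algebraMap R K a ≠ 0 := by simpa using ha
  rw [← (span K _).smul_mem_iff ha', algebraMap_smul]
  exact subset_span ⟨(W.restrictScalars R).smul_mem a hw, haw⟩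

theorem exists_linearMap_extend_of_isLattice (L : Submodule R V) [IsLattice K L] [Free R L]
    {E : Type*} [AddCommGroup E] [Module R E] [Module K E] [IsScalarTower R K E]
    (f : L →ₗ[R] E) : ∃ F : V →ₗ[K] E, ∀ x : L, F x = f x := by
  let b := Free.chooseBasis R L
  let F := (b.extendOfIsLattice K).constr K (f ∘ b)
  have hF (j) : F (b j) = f (b j) := by
    rw [← b.extendOfIsLattice_apply K j]
    exact (b.extendOfIsLattice K).constr_basis K (f ∘ b) j
  exact ⟨F, LinearMap.congr_fun (b.ext hF : F.restrictScalars R ∘ₗ L.subtype = f)⟩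

variable [IsDomain R] [IsPrincipalIdealRing R]

theorem exists_isProj_forall_mem_of_isLattice (L : Submodule R V) [IsLattice K L]
    (W : Submodule K V) : ∃ P : V →ₗ[K] V, IsProj W P ∧ ∀ x ∈ L, P x ∈ L := by
  have : IsTorsionFree R (V ⧸ W) := IsTorsionFree.trans_faithfulSMul R K (V ⧸ W)
  let q : L →ₗ[R] V ⧸ W := W.mkQ.restrictScalars R ∘ₗ L.subtype
  have hq (x : L) : x ∈ ker q ↔ (x : V) ∈ W := Quotient.mk_eq_zero W
  obtain ⟨r, hr⟩ := exists_isProj_ker_of_projective_range q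
  obtain ⟨P, hP⟩ := exists_linearMap_extend_of_isLattice L (L.subtype ∘ₗ r)
  refine ⟨P, ⟨fun v => ?_, fun w hw => ?_⟩, fun x hx => hP ⟨x, hx⟩ ▸ (r ⟨x, hx⟩).2⟩
  · have hLW : span K (L : Set V) ≤ W.comap P := span_le.mpr fun x hx => by
      simpa [hP ⟨x, hx⟩] using (hq _).mp (hr.map_mem ⟨x, hx⟩)
    exact hLW (by rw [IsLattice.span_eq_top]; trivial)
  · have hPid : Set.EqOn P (LinearMap.id : V →ₗ[K] V) (W.restrictScalars R ⊓ L : Submodule R V) :=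
      fun x hx => by simpa [hr.map_id ⟨x, hx.2⟩ ((hq _).mpr hx.1)] using hP ⟨x, hx.2⟩
    rw [← span_restrictScalars_inf L W] at hw
    exact LinearMap.eqOn_span hPid hw

theorem exists_linearMap_sub_mem_dualSubmodule [FiniteDimensional K V] {Φ : BilinForm K V}
    (hΦ : Φ.Nondegenerate) (hrefl : Φ.IsRefl) (L : Submodule R V) [IsLattice K L]
    (U : Submodule K V) :
    ∃ ι : V →ₗ[K] U, ∀ w ∈ dualSubmodule Φ (L ⊓ (orthogonal Φ U).restrictScalars R),
      w - ι w ∈ dualSubmodule Φ L := by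
  obtain ⟨P, hP, hPL⟩ := exists_isProj_forall_mem_of_isLattice L (orthogonal Φ U)
  let Q := Φ.leftAdjointOfNondegenerate hΦ P
  have hQ (v x : V) : Φ (Q v) x = Φ v (P x) :=
    Φ.isAdjointPairLeftAdjointOfNondegenerate hΦ P v x
  have hQU (v : V) : v - Q v ∈ U := by
    rw [← LinearMap.BilinForm.orthogonal_orthogonal hΦ hrefl U]
    refine fun c hc => hrefl _ _ ?_
    rw [map_sub, LinearMap.sub_apply, hQ, hP.map_id c hc, sub_self]
  refine ⟨(LinearMap.id - Q).codRestrict U hQU, fun w hw x hx => ?_⟩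
  simpa [hQ] using hw (P x) ⟨hPL x hx, hP.map_mem x⟩

end Lattice

section Integral

variable {V : Type*} [AddCommGroup V] [Module ℚ V] {Φ : BilinForm ℚ V} {L : Submodule ℤ V}

theorem mem_one_iff_exists_eq_intCast {q : ℚ} : q ∈ (1 : Submodule ℤ ℚ) ↔ ∃ n : ℤ, q = n := by
  simp [Submodule.mem_one, eq_comm]

theorem mem_dualL_iff {v : V} : v ∈ dualL Φ L ↔ v ∈ dualSubmodule Φ L :=
  forall₂_congr fun _ _ => mem_one_iff_exists_eq_intCast.symm

theorem mem_lambdaStarSet_iff {W : Submodule ℚ V} {w : V} :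
    w ∈ lambdaStarSet Φ L W ↔ w ∈ W ∧ w ∈ dualSubmodule Φ (L ⊓ W.restrictScalars ℤ) :=
  and_congr_right fun _ =>
    ⟨fun hw y hy => mem_one_iff_exists_eq_intCast.mpr (hw y hy.1 hy.2),
      fun hw y hyL hyW => mem_one_iff_exists_eq_intCast.mp (hw y ⟨hyL, hyW⟩)⟩

theorem le_dualSubmodule_of_even (hsymm : ∀ v w, Φ v w = Φ w v)
    (heven : ∀ x ∈ L, ∃ n : ℤ, Φ x x = 2 * (n : ℚ)) : L ≤ dualSubmodule Φ L := by
  intro x hx y hy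
  obtain ⟨a, ha⟩ := heven x hx
  obtain ⟨b, hb⟩ := heven y hy
  obtain ⟨c, hc⟩ := heven (x + y) (L.add_mem hx hy)
  have polarization : Φ (x + y) (x + y) = Φ x x + Φ y y + 2 * Φ x y := by
    simp only [map_add, LinearMap.add_apply, hsymm y x]
    ring
  refine mem_one_iff_exists_eq_intCast.mpr ⟨c - a - b, ?_⟩
  push_cast
  linarith

theorem exists_add_orthogonal_iff (hrefl : Φ.IsRefl) (hLL : L ≤ dualSubmodule Φ L)
    (U : Submodule ℚ V) (v : V) :
    (∃ l ∈ L, ∃ c, (c ∈ orthogonal Φ U ∧ c ∈ dualSubmodule Φ L) ∧ v = l + c) ↔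
      v ∈ dualSubmodule Φ L ∧ ∃ l ∈ L, ∀ y ∈ U, Φ v y = Φ l y := by
  constructor
  · rintro ⟨l, hl, c, ⟨hcU, hcL⟩, rfl⟩
    refine ⟨add_mem (hLL hl) hcL, l, hl, fun y hy => ?_⟩
    have hcy : Φ c y = 0 := hrefl _ _ (hcU y hy)
    simp [hcy]
  · rintro ⟨hv, l, hl, hvl⟩
    refine ⟨l, hl, v - l, ⟨fun y hy => hrefl _ _ ?_, sub_mem hv (hLL hl)⟩, by abel⟩
    simp [hvl y hy]

end Integral

section Unimodular

variable {V : Type*} [AddCommGroup V] [Module ℚ V] {Φ : BilinForm ℚ V} {I It : Submodule ℤ V}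

theorem Unimodular.exists_dual_family (h : Unimodular Φ It I) {κ : Type*} [Finite κ]
    [DecidableEq κ] (b : Basis κ ℤ I) :
    ∃ x : κ → V, (∀ j k, Φ (x j) (b k) = if j = k then 1 else 0) ∧
      It = span ℤ (Set.range x) := by
  cases nonempty_fintype κ
  choose x hx using fun j => (h.2 (b.coord j)).exists
  have hxb (j k : κ) : Φ (x j) (b k) = if j = k then 1 else 0 := by
    simp [(hx j).2, Finsupp.single_apply, eq_comm]
  refine ⟨x, hxb, le_antisymm (fun y hy => ?_)
    (span_le.mpr <| Set.range_subset_iff.mpr fun j => (hx j).1)⟩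
  choose m hm using fun j => h.1 y hy (b j) (b j).2
  have hrep {z : V} (hz : ∀ k, Φ z (b k) = m k) (i : I) : Φ z i = (b.constr ℤ m i : ℤ) := by
    have key : (Φ z).restrictScalars ℤ ∘ₗ I.subtype = Algebra.linearMap ℤ ℚ ∘ₗ b.constr ℤ m :=
      b.ext fun k => by simp [hz]
    simpa using LinearMap.congr_fun key i
  have hyx : y = ∑ j, m j • x j :=
    (h.2 (b.constr ℤ m)).unique ⟨hy, hrep hm⟩
      ⟨sum_mem fun j _ => It.smul_mem _ (hx j).1, hrep fun k => by simp [hxb]⟩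
  rw [hyx]
  exact sum_mem fun j _ => smul_mem _ _ (subset_span ⟨j, rfl⟩)

theorem Unimodular.exists_mem_forall_apply_eq (h : Unimodular Φ It I) [Module.Finite ℤ I] {v : V}
    (hv : ∀ t ∈ It, Φ t v ∈ (1 : Submodule ℤ ℚ)) : ∃ i ∈ I, ∀ t ∈ It, Φ t v = Φ t i := by
  have : IsTorsionFree ℤ V := IsTorsionFree.trans_faithfulSMul ℤ ℚ V
  classical
  let b := Free.chooseBasis ℤ I
  obtain ⟨x, hxb, rfl⟩ := h.exists_dual_family b
  choose n hn using fun j =>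
    mem_one_iff_exists_eq_intCast.mp (hv (x j) (subset_span ⟨j, rfl⟩))
  refine ⟨(∑ j, n j • b j : I), Subtype.property _, fun t ht => ?_⟩
  have hx : Set.EqOn ((Φ.flip v).restrictScalars ℤ)
      ((Φ.flip (∑ j, n j • b j : I)).restrictScalars ℤ) (Set.range x) := by
    rintro _ ⟨j, rfl⟩
    simp [hn, hxb]
  exact LinearMap.eqOn_span hx ht

theorem Unimodular.mem_of_mem_span_of_mem_dualSubmodule (h : Unimodular Φ It I)
    [Module.Finite ℤ I] {t : V} (ht : t ∈ span ℚ (It : Set V)) (htI : t ∈ dualSubmodule Φ I) :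
    t ∈ It := by
  have : IsTorsionFree ℤ V := IsTorsionFree.trans_faithfulSMul ℤ ℚ V
  classical
  let b := Free.chooseBasis ℤ I
  obtain ⟨x, hxb, rfl⟩ := h.exists_dual_family b
  have hexpand : t = ∑ j, Φ t (b j) • x j := by
    have hx : Set.EqOn (LinearMap.id : V →ₗ[ℚ] V)
        (∑ j, (Φ.flip (b j)).smulRight (x j) : V →ₗ[ℚ] V) (Set.range x) := by
      rintro _ ⟨j, rfl⟩
      simp [hxb]
    rw [span_span_of_tower] at ht
    simpa using LinearMap.eqOn_span hx ht
  rw [hexpand]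
  refine sum_mem fun j _ => ?_
  obtain ⟨n, hn⟩ := mem_one_iff_exists_eq_intCast.mp (htI (b j) (b j).2)
  rw [hn, Int.cast_smul_eq_zsmul]
  exact smul_mem _ n (subset_span ⟨j, rfl⟩)

variable {L : Submodule ℤ V} {U Wt : Submodule ℚ V}

theorem Unimodular.exists_sub_mem_orthogonal (h : Unimodular Φ It I) [Module.Finite ℤ I]
    (hIU : (I : Set V) ⊆ orthogonal Φ U) {v : V} (hvU : v ∈ orthogonal Φ U)
    (hv : ∀ t ∈ It, Φ t v ∈ (1 : Submodule ℤ ℚ)) :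
    ∃ i ∈ I, v - i ∈ orthogonal Φ (U ⊔ span ℚ (It : Set V)) := by
  obtain ⟨i, hi, hvi⟩ := h.exists_mem_forall_apply_eq hv
  have hU : U ≤ ker (Φ.flip (v - i)) := (orthogonal Φ U).sub_mem hvU (hIU hi)
  have hIt : span ℚ (It : Set V) ≤ ker (Φ.flip (v - i)) :=
    span_le.mpr fun t ht => by simp [hvi t ht]
  exact ⟨i, hi, sup_le hU hIt⟩

theorem Unimodular.mem_dualSubmodule_inf_orthogonal (h : Unimodular Φ It I)
    (hrefl : Φ.IsRefl) [Module.Finite ℤ I] (hIL : I ≤ L) (hIU : (I : Set V) ⊆ U)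
    (hUiso : U ≤ orthogonal Φ U) (hIt : It ≤ dualSubmodule Φ L)
    (hWt : Wt = orthogonal Φ (U ⊔ span ℚ (It : Set V))) {w : V} (hw : w ∈ lambdaStarSet Φ L Wt) :
    w ∈ dualSubmodule Φ (L ⊓ (orthogonal Φ U).restrictScalars ℤ) := by
  obtain ⟨hwW, hwΛ⟩ := mem_lambdaStarSet_iff.mp hw
  rintro x ⟨hxL, hxU⟩
  obtain ⟨i, hi, hxi⟩ :=
    h.exists_sub_mem_orthogonal (hIU.trans hUiso) hxU fun t ht => hIt ht x hxL
  have hwi : Φ w i = 0 := hrefl _ _ (hWt.le hwW i (mem_sup_left (hIU hi)))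
  simpa [hwi] using hwΛ (x - i) ⟨L.sub_mem hxL (hIL hi), hWt.ge hxi⟩

theorem add_add_apply_of_mem (hrefl : Φ.IsRefl) (hUiso : U ≤ orthogonal Φ U) {u w y : V}
    (hu : u ∈ U) (hw : w ∈ orthogonal Φ U) (hy : y ∈ U) (t : V) : Φ (u + w + t) y = Φ t y := by
  have huy : Φ u y = 0 := hUiso hy u hu
  have hwy : Φ w y = 0 := hrefl _ _ (hw y hy)
  simp [huy, hwy]

theorem mem_lambdaStarSet_of_add_add_mem_dualSubmodule
    (hWt : Wt ≤ orthogonal Φ (U ⊔ span ℚ (It : Set V))) {u w t : V} (hu : u ∈ U) (hw : w ∈ Wt)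
    (ht : t ∈ span ℚ (It : Set V)) (hsum : u + w + t ∈ dualSubmodule Φ L) :
    w ∈ lambdaStarSet Φ L Wt := by
  refine mem_lambdaStarSet_iff.mpr ⟨hw, fun y hy => ?_⟩
  have huy : Φ u y = 0 := hWt hy.2 u (mem_sup_left hu)
  have hty : Φ t y = 0 := hWt hy.2 t (mem_sup_right ht)
  simpa [huy, hty] using hsum y hy.1

theorem Unimodular.add_add_mem_dualL_iff (h : Unimodular Φ It I) (hrefl : Φ.IsRefl)
    [Module.Finite ℤ I] (hIL : I ≤ L) (hIU : (I : Set V) ⊆ U) (hUiso : U ≤ orthogonal Φ U)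
    (hIt : It ≤ dualSubmodule Φ L) (hWt : Wt ≤ orthogonal Φ (U ⊔ span ℚ (It : Set V)))
    {u u' w t : V} (hu : u ∈ U) (hu' : u' ∈ U) (hw : w ∈ Wt) (ht : t ∈ span ℚ (It : Set V))
    (hwu' : w ∈ lambdaStarSet Φ L Wt → w - u' ∈ dualSubmodule Φ L) :
    u + w + t ∈ dualL Φ L ↔
      w ∈ lambdaStarSet Φ L Wt ∧ t ∈ It ∧ u + u' ∈ ILstarSet Φ L U := by
  rw [mem_dualL_iff]
  constructor
  · intro hsum
    have hwΛ := mem_lambdaStarSet_of_add_add_mem_dualSubmodule hWt hu hw ht hsum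
    have hwU : w ∈ orthogonal Φ U := LinearMap.BilinForm.orthogonal_le le_sup_left (hWt hw)
    have htI : t ∈ It := h.mem_of_mem_span_of_mem_dualSubmodule ht fun y hy =>
      add_add_apply_of_mem hrefl hUiso hu hwU (hIU hy) t ▸ hsum y (hIL hy)
    refine ⟨hwΛ, htI, U.add_mem hu hu', mem_dualL_iff.mpr ?_⟩
    convert sub_mem (sub_mem hsum (hIt htI)) (hwu' hwΛ) using 1
    abel
  · rintro ⟨hwΛ, htI, -, huu'⟩
    convert add_mem (add_mem (mem_dualL_iff.mp huu') (hwu' hwΛ)) (hIt htI) using 1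
    abel

theorem exists_add_iff_mem_dualL_and_exists_mem (hrefl : Φ.IsRefl) (hLL : L ≤ dualSubmodule Φ L)
    (hUspan : U = span ℚ (I : Set V)) (hUiso : U ≤ orthogonal Φ U) {u w : V} (hu : u ∈ U)
    (hw : w ∈ orthogonal Φ U) (t : V) :
    (∃ l ∈ L, ∃ c, (c ∈ perp Φ U ∧ c ∈ dualL Φ L) ∧ u + w + t = l + c) ↔
      u + w + t ∈ dualL Φ L ∧ ∃ ν ∈ L, ∀ y ∈ I, Φ t y = Φ ν y := by
  have hspan (l : V) : (∀ y ∈ U, Φ (u + w + t) y = Φ l y) ↔ ∀ y ∈ I, Φ t y = Φ l y :=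
    calc (∀ y ∈ U, Φ (u + w + t) y = Φ l y)
      _ ↔ ∀ y ∈ U, Φ t y = Φ l y :=
        forall₂_congr fun y hy => by rw [add_add_apply_of_mem hrefl hUiso hu hw hy]
      _ ↔ ∀ y ∈ I, Φ t y = Φ l y := by
        rw [hUspan]
        exact LinearMap.eqOn_span_iff
  simp only [mem_dualL_iff, ← hspan]
  exact exists_add_orthogonal_iff hrefl hLL U _

end Unimodular

theorem stmt15_general {V : Type*} [AddCommGroup V] [Module ℚ V] [FiniteDimensional ℚ V]
    {Φ : BilinForm ℚ V} (hΦ : Φ.Nondegenerate) (hrefl : Φ.IsRefl)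
    {L : Submodule ℤ V} [IsLattice ℚ L] (hLL : L ≤ dualSubmodule Φ L)
    {U : Submodule ℚ V} (hUiso : U ≤ orthogonal Φ U)
    {I : Submodule ℤ V} (hI : I = U.restrictScalars ℤ ⊓ L)
    {It : Submodule ℤ V} (hIt : It ≤ dualSubmodule Φ L) (huni : Unimodular Φ It I)
    {Ut : Submodule ℚ V} (hUt : Ut = span ℚ (It : Set V))
    {Wt : Submodule ℚ V} (hWt : Wt = perp Φ (U ⊔ Ut)) :
    ∃ ι : V →ₗ[ℚ] U, (∀ x ∈ lambdaSet L Wt, (ι x : V) ∈ ILstarSet Φ L U) ∧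
      ∀ u ∈ U, ∀ w ∈ Wt, ∀ t ∈ Ut,
        (u + w + t ∈ dualL Φ L ↔
          w ∈ lambdaStarSet Φ L Wt ∧ t ∈ It ∧ u + ι w ∈ ILstarSet Φ L U) ∧
        ((∃ l ∈ L, ∃ c, (c ∈ perp Φ U ∧ c ∈ dualL Φ L) ∧ u + w + t = l + c) ↔
          w ∈ lambdaStarSet Φ L Wt ∧ t ∈ ItLSet Φ L I It ∧ u + ι w ∈ ILstarSet Φ L U) := by
  subst hUt
  have hIL : I ≤ L := hI.le.trans inf_le_right
  have hUspan : U = span ℚ (I : Set V) := hI ▸ (span_restrictScalars_inf L U).symm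
  have hIU : (I : Set V) ⊆ U := fun x hx => (hI.le hx).1
  have : Module.Finite ℤ I := Finite.iff_fg.mpr (IsLattice.fg.of_le hIL)
  obtain ⟨ι, hι⟩ := exists_linearMap_sub_mem_dualSubmodule hΦ hrefl L U
  have hιΛ {w : V} (hw : w ∈ lambdaStarSet Φ L Wt) : w - ι w ∈ dualSubmodule Φ L :=
    hι w (huni.mem_dualSubmodule_inf_orthogonal hrefl hIL hIU hUiso hIt hWt hw)
  refine ⟨ι, fun x hx => ⟨(ι x).2, mem_dualL_iff.mpr ?_⟩, fun u hu w hw t ht => ?_⟩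
  · have hxΛ : x ∈ lambdaStarSet Φ L Wt :=
      mem_lambdaStarSet_iff.mpr ⟨hx.2, fun y hy => hLL hx.1 y hy.1⟩
    simpa using sub_mem (hLL hx.1) (hιΛ hxΛ)
  · have hwU : w ∈ orthogonal Φ U := LinearMap.BilinForm.orthogonal_le le_sup_left (hWt.le hw)
    have hdual := huni.add_add_mem_dualL_iff hrefl hIL hIU hUiso hIt hWt.le hu (ι w).2 hw ht hιΛ
    refine ⟨hdual, ?_⟩
    rw [exists_add_iff_mem_dualL_and_exists_mem hrefl hLL hUspan hUiso hu hwU t, hdual]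
    exact ⟨fun ⟨⟨hw, ht, hu⟩, hν⟩ => ⟨hw, ⟨ht, hν⟩, hu⟩,
      fun ⟨hw, ⟨ht, hν⟩, hu⟩ => ⟨⟨hw, ht, hu⟩, hν⟩⟩

/-- **Theorem: decomposition of `L*` and `L + I^⊥_{L*}`.** With the
same data, there is a ℤ-linear map `ι̂ : Λ̃*/Λ̃ → U/I_{L*}` (encoded as a function
`ι̂ : V → V` mapping `Λ̃*` into `U`, well-defined modulo `Λ̃` and additive modulo
`I_{L*}`) such that `u + w + ũ ∈ L*` iff `w ∈ Λ̃*`, `ũ ∈ Ĩ`, and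
`u ≡ −ι̂(w) mod I_{L*}`, and `u + w + ũ ∈ L + I^⊥_{L*}` iff `w ∈ Λ̃*`, `ũ ∈ Ĩ_L`,
and `u ≡ −ι̂(w) mod I_{L*}`. -/
theorem stmt15 {V : Type*} [AddCommGroup V] [Module ℚ V] [FiniteDimensional ℚ V]
    (Φ : V →ₗ[ℚ] V →ₗ[ℚ] ℚ)
    (hsymm : ∀ v w : V, Φ v w = Φ w v)
    (hnd : ∀ v : V, (∀ w : V, Φ v w = 0) → v = 0)
    (L : Submodule ℤ V) (hfg : L.FG)
    (hLspan : Submodule.span ℚ (L : Set V) = ⊤)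
    (heven : ∀ x ∈ L, ∃ n : ℤ, Φ x x = 2 * (n : ℚ))
    (U : Submodule ℚ V)
    (hUiso : ∀ u ∈ U, ∀ u' ∈ U, Φ u u' = 0)
    (I : Submodule ℤ V) (hI : I = U.restrictScalars ℤ ⊓ L)
    (hU : U = Submodule.span ℚ (I : Set V))
    (It : Submodule ℤ V) (hItdual : (It : Set V) ⊆ dualL Φ L)
    (hItuni : Unimodular Φ It I)
    (Ut : Submodule ℚ V) (hUt : Ut = Submodule.span ℚ (It : Set V))
    (Wt : Submodule ℚ V) (hWt : Wt = perp Φ (U ⊔ Ut)) :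
    ∃ ιh : V → V,
      -- ι̂ maps Λ̃* into U
      (∀ w ∈ lambdaStarSet Φ L Wt, ιh w ∈ U) ∧
      -- ι̂ is well-defined modulo Λ̃, with values modulo I_{L*}
      (∀ w ∈ lambdaStarSet Φ L Wt, ∀ w' ∈ lambdaStarSet Φ L Wt,
        w - w' ∈ lambdaSet L Wt → ιh w - ιh w' ∈ ILstarSet Φ L U) ∧
      -- ι̂ is additive modulo I_{L*} (i.e. gives a ℤ-linear map Λ̃*/Λ̃ → U/I_{L*})
      (∀ w ∈ lambdaStarSet Φ L Wt, ∀ w' ∈ lambdaStarSet Φ L Wt,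
        ιh (w + w') - ιh w - ιh w' ∈ ILstarSet Φ L U) ∧
      -- characterizations of membership in L* and in L + I^⊥_{L*}
      (∀ u ∈ U, ∀ w ∈ Wt, ∀ t ∈ Ut,
        ((u + w + t ∈ dualL Φ L ↔
          w ∈ lambdaStarSet Φ L Wt ∧ t ∈ It ∧ u + ιh w ∈ ILstarSet Φ L U) ∧
         ((∃ l ∈ L, ∃ c : V, (c ∈ perp Φ U ∧ c ∈ dualL Φ L) ∧ u + w + t = l + c) ↔
          w ∈ lambdaStarSet Φ L Wt ∧ t ∈ ItLSet Φ L I It ∧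
          u + ιh w ∈ ILstarSet Φ L U))) := by
  have : IsLattice ℚ L := ⟨hfg, hLspan⟩
  have hrefl : Φ.IsRefl := fun v w h => hsymm v w ▸ h
  obtain ⟨ι, hιΛ, hι⟩ := stmt15_general (hrefl.nondegenerate_iff_separatingLeft.mpr hnd) hrefl
    (le_dualSubmodule_of_even hsymm heven) (fun u' hu' u hu => hUiso u hu u' hu') hI
    (fun t ht => mem_dualL_iff.mp (hItdual ht)) hItuni hUt hWt
  refine ⟨fun v => ι v, fun w _ => (ι w).2, fun w _ w' _ h => by simpa using hιΛ _ h,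
    fun w _ w' _ => ?_, hι⟩
  simpa using hιΛ 0 ⟨L.zero_mem, Wt.zero_mem⟩
end
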